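/- arXiv:2409.04814 — 2 statements merged into one kernel-verified Lean document; each statement's English description precedes it below -/
import Mathlib

section
/- Let ω ∈ Ω. There exist C > 0 and X₀ > 0 such that for all X ≥ X₀, (1/X)·∫_X^{2X} Ξ_ψ(x;ω)² dx ≤ C·X²·(log X)⁴. -/
open MeasureTheory Filter Real

noncomputable section

/-- The Cygan–Korányi norm on `ℝ³`. -/
def cyganNorm (u : ℝ × ℝ × ℝ) : ℝ :=
  ((u.1 ^ 2 + u.2.1 ^ 2) ^ 2 + u.2.2 ^ 2) ^ ((1 : ℝ) / 4)

/-- The unit ball for the Cygan–Korányi norm. -/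
def cyganBall : Set (ℝ × ℝ × ℝ) := {u | cyganNorm u ≤ 1}

/-- The Heisenberg dilation `δ_x`. -/
def heisDil (x : ℝ) (u : ℝ × ℝ × ℝ) : ℝ × ℝ × ℝ := (x * u.1, x * u.2.1, x ^ 2 * u.2.2)

/-- Euclidean volume of the Cygan–Korányi unit ball. -/
def volB : ℝ := (volume cyganBall).toReal

/-- `N(x)`: the number of integer lattice points inside `δ_x B`. -/
def latticeCount (x : ℝ) : ℕ :=
  Set.ncard {p : ℤ × ℤ × ℤ | ((p.1 : ℝ), (p.2.1 : ℝ), (p.2.2 : ℝ)) ∈ heisDil x '' cyganBall}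

/-- The error term `E(x;ω)` for the shell count. -/
def Eshell (ω : ℝ → ℝ) (x : ℝ) : ℝ :=
  ((latticeCount (x + ω x) : ℝ) - (latticeCount x : ℝ))
    - volB * ∑ j ∈ Finset.Icc 1 4, (Nat.choose 4 j : ℝ) * x ^ (4 - j) * ω x ^ j

/-- The normalized error term `Ê(x;ω) = E(x;ω)/x²`. -/
def Ehat (ω : ℝ → ℝ) (x : ℝ) : ℝ := Eshell ω x / x ^ 2

/-- `σ(X;ω)`, the square root of the variance of `Ê(x;ω)` over `[X,2X]`. -/
def sigmaShell (ω : ℝ → ℝ) (X : ℝ) : ℝ :=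
  Real.sqrt ((1 / X) * ∫ x in X..(2 * X), Ehat ω x ^ 2)

/-- `M_j(X;ω) = (1/X)·∫_X^{2X} (ω(x)·log ω(x))^j dx`. -/
def Mom (j : ℕ) (X : ℝ) (ω : ℝ → ℝ) : ℝ :=
  (1 / X) * ∫ x in X..(2 * X), (ω x * Real.log (ω x)) ^ j

/-- `L_j(ω) = lim_{X→∞} M_j(X;ω)/M_2(X;ω)^{j/2}`. -/
def Llim (ω : ℝ → ℝ) (j : ℕ) : ℝ :=
  limUnder atTop fun X => Mom j X ω / Mom 2 X ω ^ (j / 2)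

/-- The Gaussian moment factor `j!/(2^{j/2}·(j/2)!)`. -/
def gaussMoment (j : ℕ) : ℝ :=
  (Nat.factorial j : ℝ) / (2 ^ (j / 2) * (Nat.factorial (j / 2) : ℝ))

/-- The regularity class `Ω` of gap width functions. -/
structure OmegaClass (ω : ℝ → ℝ) : Prop where
  contDiff : ContDiffOn ℝ 2 ω (Set.Ioi 0)
  pos : ∀ x, 0 < x → 0 < ω x
  tendsto_zero : Tendsto ω atTop (nhds 0)
  deriv_small : ∀ᶠ x in atTop, |deriv ω x| < 1 / 2
  zeros_bound : ∃ C > (0 : ℝ), ∃ ξ > (0 : ℝ), ∀ᶠ X in atTop,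
    {x ∈ Set.Icc X (2 * X) | deriv ω x = 0}.Finite ∧
    {x ∈ Set.Icc X (2 * X) | deriv (deriv ω) x = 0}.Finite ∧
    ({x ∈ Set.Icc X (2 * X) | deriv ω x = 0}.ncard : ℝ) *
        sSup (ω '' Set.Icc X (2 * X)) ≤ C * X ^ ((1 : ℝ) / 2) ∧
    ({x ∈ Set.Icc X (2 * X) | deriv (deriv ω) x = 0}.ncard : ℝ) ≤ C * X ^ (1 - ξ)
  mom2_lower : ∀ α > (0 : ℝ), ∃ c > (0 : ℝ), ∀ᶠ X in atTop, c * X ^ (-α) ≤ Mom 2 X ω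
  Llim_exists : ∀ j : ℕ, Even j →
    Tendsto (fun X => Mom j X ω / Mom 2 X ω ^ (j / 2)) atTop (nhds (Llim ω j))
  carleman : Tendsto (fun n => ∑ k ∈ Finset.range n,
      (gaussMoment (2 * (k + 1)) * Llim ω (2 * (k + 1))) ^
        ((-1 : ℝ) / (2 * ((k : ℝ) + 1)))) atTop atTop

/-- `r₂(m)`: the number of representations of `m` as a sum of two integer squares. -/
def r2 (m : ℕ) : ℕ := Set.ncard {p : ℤ × ℤ | p.1 ^ 2 + p.2 ^ 2 = (m : ℤ)}

/-- The sawtooth function `ψ(t) = t − ⌊t⌋ − 1/2`. -/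
def sawtooth (t : ℝ) : ℝ := t - ⌊t⌋ - 1 / 2

/-- The sawtooth sum `Ξ_ψ(x;ω)`. -/
def XiPsi (ω : ℝ → ℝ) (x : ℝ) : ℝ :=
  (∑ m ∈ Finset.Icc 1 ⌊(x + ω x) ^ 2⌋₊,
      (r2 m : ℝ) * sawtooth (Real.sqrt ((x + ω x) ^ 4 - (m : ℝ) ^ 2)))
    - ∑ m ∈ Finset.Icc 1 ⌊x ^ 2⌋₊, (r2 m : ℝ) * sawtooth (Real.sqrt (x ^ 4 - (m : ℝ) ^ 2))

lemma sum_inv_le (M : ℕ) : ∑ k ∈ Finset.Icc 1 M, (1 / (k : ℝ)) ≤ 1 + Real.log M := by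
  have h := harmonic_le_one_add_log M
  rw [harmonic_eq_sum_Icc] at h
  push_cast at h
  simpa [one_div] using h

/-- Quadruples `(u, v, w, z)` in a box with `u v = w z`. -/
def quadBox (D : ℕ) : Finset (ℤ × ℤ × ℤ × ℤ) :=
  ((Finset.Icc (-(D : ℤ)) D) ×ˢ (Finset.Icc (-(D : ℤ)) D) ×ˢ (Finset.Icc (-(D : ℤ)) D) ×ˢ
    (Finset.Icc (-(D : ℤ)) D)).filter (fun x => x.1 * x.2.1 = x.2.2.1 * x.2.2.2)

lemma mem_quadBox {D : ℕ} {u v w z : ℤ} : (u, v, w, z) ∈ quadBox D ↔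
    |u| ≤ D ∧ |v| ≤ D ∧ |w| ≤ D ∧ |z| ≤ D ∧ u * v = w * z := by
  simp only [quadBox, Finset.mem_filter, Finset.mem_product, Finset.mem_Icc, abs_le]
  tauto

/-- Parameter set. -/
def parBox (D : ℕ) : Finset (Σ _ : ℕ, ℤ × ℤ × ℤ) :=
  (Finset.Icc 1 D).sigma (fun p => (Finset.Icc (-(p : ℤ)) p) ×ˢ
    (Finset.Icc (-((D / p : ℕ) : ℤ)) ((D / p : ℕ) : ℤ)) ×ˢ
    (Finset.Icc (-((D / p : ℕ) : ℤ)) ((D / p : ℕ) : ℤ)))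

lemma card_parBox (D : ℕ) : ((parBox D).card : ℝ) ≤ 27 * (D : ℝ) ^ 2 * (1 + Real.log D) := by
  have h1 : ((parBox D).card : ℝ) = ∑ p ∈ Finset.Icc 1 D,
      ((2 * p + 1 : ℝ) * ((2 * ((D / p : ℕ) : ℝ) + 1) * (2 * ((D / p : ℕ) : ℝ) + 1))) := by
    have e : ∀ n : ℕ, (((n : ℤ) + 1 - (-(n : ℤ))).toNat : ℕ) = 2 * n + 1 := by
      intro n; omega
    rw [parBox, Finset.card_sigma]
    simp only [Finset.card_product, Int.card_Icc, e]
    push_cast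
    rfl
  rw [h1]
  calc _ ≤ ∑ p ∈ Finset.Icc 1 D, 27 * (D : ℝ) ^ 2 * (1 / (p : ℝ)) := by
        apply Finset.sum_le_sum
        intro p hp
        rw [Finset.mem_Icc] at hp
        have hp1 : (1 : ℝ) ≤ p := by exact_mod_cast hp.1
        have hpD : (p : ℝ) ≤ D := by exact_mod_cast hp.2
        have hd : ((D / p : ℕ) : ℝ) ≤ (D : ℝ) / p := Nat.cast_div_le
        have hd0 : (0 : ℝ) ≤ ((D / p : ℕ) : ℝ) := by positivity
        have hq : 1 ≤ (D : ℝ) / p := by rw [le_div_iff₀ (by linarith)]; linarith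
        have h3 : 2 * ((D / p : ℕ) : ℝ) + 1 ≤ 3 * ((D : ℝ) / p) := by linarith
        calc _ ≤ (3 * (p : ℝ)) * ((3 * ((D : ℝ) / p)) * (3 * ((D : ℝ) / p))) := by
              gcongr
              linarith
          _ = _ := by field_simp; ring
    _ = 27 * (D : ℝ) ^ 2 * ∑ p ∈ Finset.Icc 1 D, (1 / (p : ℝ)) := by rw [Finset.mul_sum]
    _ ≤ _ := by
        have := sum_inv_le D
        gcongr

/-- Covering map. -/
def covMap (x : Σ _ : ℕ, ℤ × ℤ × ℤ) : ℤ × ℤ × ℤ × ℤ :=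
  ((x.1 : ℤ) * x.2.2.1, x.2.1 * x.2.2.2, x.2.1 * x.2.2.1, (x.1 : ℤ) * x.2.2.2)

lemma cover_aux {D : ℕ} {u v w z : ℤ} (hu : |u| ≤ D) (hz : |z| ≤ D) (h : u * v = w * z)
    (hwu : |w| ≤ |u|) (hu0 : u ≠ 0) : (u, v, w, z) ∈ (parBox D).image covMap := by
  -- choose s with u = p s, p > 0
  obtain ⟨p, q, s, hp, hcop, hus, hws⟩ : ∃ p : ℕ, ∃ q s : ℤ, 0 < p ∧ IsCoprime (p : ℤ) q ∧
      u = p * s ∧ w = q * s := by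
    obtain ⟨g, a, b, hg, hab, rfl, rfl⟩ := Int.exists_gcd_one' (m := u) (n := w)
      (Int.gcd_pos_of_ne_zero_left _ hu0)
    have ha : a ≠ 0 := by rintro rfl; simp at hu0
    have hcop : IsCoprime a b := Int.isCoprime_iff_gcd_eq_one.2 hab
    rcases lt_or_gt_of_ne ha with h0 | h0
    · refine ⟨a.natAbs, -b, -(g : ℤ), by omega, ?_, ?_, ?_⟩
      · have : ((a.natAbs : ℕ) : ℤ) = -a := by omega
        rw [this]; exact hcop.neg_neg
      · have : ((a.natAbs : ℕ) : ℤ) = -a := by omega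
        rw [this]; ring
      · ring
    · refine ⟨a.natAbs, b, (g : ℤ), by omega, ?_, ?_, ?_⟩
      · have : ((a.natAbs : ℕ) : ℤ) = a := by omega
        rw [this]; exact hcop
      · have : ((a.natAbs : ℕ) : ℤ) = a := by omega
        rw [this]
      · ring
  have hs0 : s ≠ 0 := by rintro rfl; simp at hus; exact hu0 hus
  have hpv : (p : ℤ) * v = q * z := by
    apply mul_left_cancel₀ hs0
    rw [hus, hws] at h
    linarith
  obtain ⟨t, ht⟩ : (p : ℤ) ∣ z := hcop.dvd_of_dvd_mul_left ⟨v, hpv.symm⟩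
  have hp0 : (p : ℤ) ≠ 0 := by positivity
  have hv : v = q * t := by
    apply mul_left_cancel₀ hp0
    rw [hpv, ht]; ring
  have hq : |q| ≤ p := by
    rw [hus, hws, abs_mul, abs_mul] at hwu
    have := le_of_mul_le_mul_right hwu (abs_pos.2 hs0)
    simpa using this
  have bound : ∀ y : ℤ, |(p : ℤ) * y| ≤ D → |y| ≤ ((D / p : ℕ) : ℤ) := by
    intro y hy
    rw [abs_mul, Nat.abs_cast] at hy
    have : y.natAbs ≤ D / p := by
      rw [Nat.le_div_iff_mul_le hp, mul_comm]
      zify; exact hy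
    zify at this
    simpa using this
  have hsb := bound s (by rw [← hus]; exact hu)
  have htb := bound t (by rw [← ht]; exact hz)
  have hpD : p ≤ D := by
    have : (p : ℤ) * 1 ≤ p * |s| := by
      have := Int.one_le_abs hs0
      gcongr
    rw [hus, abs_mul, Nat.abs_cast] at hu
    zify; linarith
  rw [Finset.mem_image]
  refine ⟨⟨p, q, s, t⟩, ?_, ?_⟩
  · simp only [parBox, Finset.mem_sigma, Finset.mem_product, Finset.mem_Icc]
    exact ⟨⟨hp, hpD⟩, abs_le.1 hq, abs_le.1 hsb, abs_le.1 htb⟩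
  · simp only [covMap]
    rw [hus, hws, hv, ht]

lemma card_quadBox (D : ℕ) : ((quadBox D).card : ℝ) ≤
    54 * (D : ℝ) ^ 2 * (1 + Real.log D) + (2 * D + 1) ^ 2 := by
  classical
  have hsub : quadBox D ⊆ ((parBox D).image covMap ∪
      ((parBox D).image covMap).image (fun x => (x.2.2.1, x.2.2.2, x.1, x.2.1))) ∪
      ((Finset.Icc (-(D : ℤ)) D) ×ˢ (Finset.Icc (-(D : ℤ)) D)).image
        (fun y : ℤ × ℤ => ((0 : ℤ), y.1, (0 : ℤ), y.2)) := by
    rintro ⟨u, v, w, z⟩ hx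
    rw [mem_quadBox] at hx
    obtain ⟨hu, hv, hw, hz, h⟩ := hx
    rw [Finset.mem_union, Finset.mem_union]
    by_cases h0 : u = 0 ∧ w = 0
    · right
      rw [Finset.mem_image]
      refine ⟨(v, z), ?_, ?_⟩
      · simp only [Finset.mem_product, Finset.mem_Icc]
        exact ⟨abs_le.1 hv, abs_le.1 hz⟩
      · simp [h0.1, h0.2]
    · left
      rcases le_total |w| |u| with hle | hle
      · left
        apply cover_aux hu hz h hle
        rintro rfl
        apply h0
        simpa using hle
      · right
        rw [Finset.mem_image]
        refine ⟨(w, z, u, v), ?_, rfl⟩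
        apply cover_aux hw hv h.symm hle
        rintro rfl
        apply h0
        simpa using hle
  have h1 := Finset.card_le_card hsub
  have h2 : (quadBox D).card ≤ (parBox D).card + (parBox D).card + (2 * D + 1) * (2 * D + 1) := by
    refine h1.trans ((Finset.card_union_le _ _).trans ?_)
    refine add_le_add ((Finset.card_union_le _ _).trans ?_) ?_
    · exact add_le_add Finset.card_image_le (Finset.card_image_le.trans Finset.card_image_le)
    · refine Finset.card_image_le.trans ?_
      have e : (((D : ℤ) + 1 - (-(D : ℤ))).toNat : ℕ) = 2 * D + 1 := by omega
      rw [Finset.card_product, Int.card_Icc, e]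
  have h3 : ((quadBox D).card : ℝ) ≤ (parBox D).card + (parBox D).card + (2 * D + 1) * (2 * D + 1) := by
    exact_mod_cast h2
  have := card_parBox D
  nlinarith

/-- Representations inside a box. -/
def repBox (B m : ℕ) : Finset (ℤ × ℤ) :=
  ((Finset.Icc (-(B : ℤ)) B) ×ˢ (Finset.Icc (-(B : ℤ)) B)).filter
    (fun p => p.1 ^ 2 + p.2 ^ 2 = (m : ℤ))

lemma r2_eq (N m : ℕ) (h : m ≤ N) : r2 m = (repBox (Nat.sqrt N) m).card := by
  rw [r2, ← Set.ncard_coe_finset]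
  congr 1
  ext ⟨a, b⟩
  simp only [repBox, Set.mem_ofPred_eq, Finset.coe_filter, Finset.mem_product, Finset.mem_Icc,
    ← abs_le]
  have key : ∀ a b : ℤ, a ^ 2 + b ^ 2 = m → |a| ≤ (Nat.sqrt N : ℤ) := by
    intro a b hab
    have h1 : a.natAbs ≤ Nat.sqrt N := by
      rw [Nat.le_sqrt']
      zify
      rw [sq_abs]
      have : (m : ℤ) ≤ N := by exact_mod_cast h
      nlinarith [sq_nonneg b]
    zify at h1
    exact h1
  constructor
  · intro hab
    exact ⟨⟨key a b hab, key b a (by linarith)⟩, hab⟩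
  · exact fun h => h.2

lemma sum_r2_sq_nat (N : ℕ) : ∑ m ∈ Finset.Icc 1 N, (r2 m) ^ 2 ≤ (quadBox (2 * Nat.sqrt N)).card := by
  have h1 : ∑ m ∈ Finset.Icc 1 N, (r2 m) ^ 2 =
      ((Finset.Icc 1 N).sigma (fun m => repBox (Nat.sqrt N) m ×ˢ repBox (Nat.sqrt N) m)).card := by
    rw [Finset.card_sigma]
    apply Finset.sum_congr rfl
    intro m hm
    rw [r2_eq N m (Finset.mem_Icc.1 hm).2, Finset.card_product, sq]
  rw [h1]
  apply Finset.card_le_card_of_injOn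
    (fun x => (x.2.1.1 - x.2.2.1, x.2.1.1 + x.2.2.1, x.2.2.2 - x.2.1.2, x.2.2.2 + x.2.1.2))
  · rintro ⟨m, ⟨a, b⟩, ⟨c, d⟩⟩ hx
    simp only [Finset.coe_sigma, Set.mem_sigma_iff, Finset.mem_coe, Finset.mem_product, repBox,
      Finset.mem_filter, Finset.mem_Icc] at hx
    obtain ⟨-, ⟨⟨⟨h1, h2⟩, h3, h4⟩, h5⟩, ⟨⟨h6, h7⟩, h8, h9⟩, h10⟩ := hx
    simp only [Finset.mem_coe]
    rw [mem_quadBox]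
    simp only [abs_le]
    push_cast
    refine ⟨⟨by linarith, by linarith⟩, ⟨by linarith, by linarith⟩, ⟨by linarith, by linarith⟩,
      ⟨by linarith, by linarith⟩, by linarith⟩
  · rintro ⟨m, ⟨a, b⟩, ⟨c, d⟩⟩ hx ⟨m', ⟨a', b'⟩, ⟨c', d'⟩⟩ hx' h
    simp only [Finset.coe_sigma, Set.mem_sigma_iff, Finset.mem_coe, Finset.mem_product, repBox,
      Finset.mem_filter, Finset.mem_Icc] at hx hx'
    have e1 := hx.2.1.2
    have e2 := hx'.2.1.2
    simp only [Prod.mk.injEq] at h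
    obtain ⟨g1, g2, g3, g4⟩ := h
    obtain rfl : a = a' := by linarith
    obtain rfl : b = b' := by linarith
    obtain rfl : c = c' := by linarith
    obtain rfl : d = d' := by linarith
    obtain rfl : m = m' := by
      have : (m : ℤ) = m' := by rw [← e1, ← e2]
      exact_mod_cast this
    rfl

lemma sum_r2_sq (N : ℕ) (hN : 1 ≤ N) :
    ∑ m ∈ Finset.Icc 1 N, (r2 m : ℝ) ^ 2 ≤ 500 * N * (1 + Real.log N) := by
  have h1 : ∑ m ∈ Finset.Icc 1 N, (r2 m : ℝ) ^ 2 ≤ ((quadBox (2 * Nat.sqrt N)).card : ℝ) := by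
    exact_mod_cast sum_r2_sq_nat N
  refine h1.trans ((card_quadBox _).trans ?_)
  set B := Nat.sqrt N with hB
  have hB1 : 1 ≤ B := by rw [hB, Nat.le_sqrt]; omega
  have hBN : B * B ≤ N := Nat.sqrt_le N
  have hB1' : (1 : ℝ) ≤ B := by exact_mod_cast hB1
  have hBN' : (B : ℝ) ^ 2 ≤ N := by rw [sq]; exact_mod_cast hBN
  have hN' : (1 : ℝ) ≤ N := by exact_mod_cast hN
  have hlogN : 0 ≤ Real.log N := Real.log_nonneg hN'
  push_cast
  have hlog : Real.log (2 * B) ≤ 1 + Real.log N := by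
    have : Real.log (2 * B) ≤ Real.log (2 * N) := by
      apply Real.log_le_log (by positivity)
      nlinarith
    rw [Real.log_mul (x := 2) (y := (N : ℝ)) (by norm_num) (by positivity)] at this
    have := Real.log_two_lt_d9
    linarith
  have hl0 : 0 ≤ Real.log (2 * B) := Real.log_nonneg (by linarith)
  have h2 : 54 * (2 * (B : ℝ)) ^ 2 * (1 + Real.log (2 * B)) ≤ 54 * (4 * N) * (2 + Real.log N) := by
    have : (2 * (B : ℝ)) ^ 2 ≤ 4 * N := by nlinarith
    have h' : 1 + Real.log (2 * B) ≤ 2 + Real.log N := by linarith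
    exact mul_le_mul (by linarith) h' (by linarith) (by positivity)
  have h3 : (2 * (2 * (B : ℝ)) + 1) ^ 2 ≤ 25 * N := by nlinarith
  nlinarith [mul_nonneg (by linarith : (0 : ℝ) ≤ N) hlogN]

lemma abel_aux (a : ℕ → ℝ) (M : ℕ) : ∑ m ∈ Finset.Icc 1 M, a m / m =
    (∑ m ∈ Finset.Icc 1 M, a m) / (M + 1) +
      ∑ n ∈ Finset.Icc 1 M, (∑ m ∈ Finset.Icc 1 n, a m) / (n * (n + 1)) := by
  induction M with
  | zero => simp
  | succ M ih =>
    rw [Finset.sum_Icc_succ_top (by omega), ih, Finset.sum_Icc_succ_top (by omega) (f := a),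
      Finset.sum_Icc_succ_top (by omega) (f := fun n : ℕ => (∑ m ∈ Finset.Icc 1 n, a m) / (n * (n + 1))),
      Finset.sum_Icc_succ_top (by omega) (f := a)]
    push_cast
    have : (M : ℝ) + 1 ≠ 0 := by positivity
    have : (M : ℝ) + 1 + 1 ≠ 0 := by positivity
    field_simp
    ring

lemma sum_r2_sq_div (M : ℕ) (hM : 1 ≤ M) :
    ∑ m ∈ Finset.Icc 1 M, (r2 m : ℝ) ^ 2 / m ≤ 1000 * (1 + Real.log M) ^ 2 := by
  have hM' : (1 : ℝ) ≤ M := by exact_mod_cast hM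
  have hl : 0 ≤ Real.log M := Real.log_nonneg hM'
  rw [abel_aux]
  have h1 : (∑ m ∈ Finset.Icc 1 M, (r2 m : ℝ) ^ 2) / (M + 1) ≤ 500 * (1 + Real.log M) := by
    rw [div_le_iff₀ (by positivity)]
    refine (sum_r2_sq M hM).trans ?_
    nlinarith
  have h2 : ∑ n ∈ Finset.Icc 1 M, (∑ m ∈ Finset.Icc 1 n, (r2 m : ℝ) ^ 2) / (n * (n + 1))
      ≤ ∑ n ∈ Finset.Icc 1 M, 500 * (1 + Real.log M) * (1 / (n : ℝ)) := by
    apply Finset.sum_le_sum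
    intro n hn
    rw [Finset.mem_Icc] at hn
    have hn1 : (1 : ℝ) ≤ n := by exact_mod_cast hn.1
    have hnM : (n : ℝ) ≤ M := by exact_mod_cast hn.2
    have hlog : Real.log n ≤ Real.log M := Real.log_le_log (by linarith) hnM
    have hln : 0 ≤ Real.log n := Real.log_nonneg hn1
    rw [div_le_iff₀ (by positivity)]
    refine (sum_r2_sq n hn.1).trans ?_
    have : 500 * (1 + Real.log M) * (1 / (n : ℝ)) * (n * (n + 1)) = 500 * (1 + Real.log M) * (n + 1) := by
      field_simp
    rw [this]
    nlinarith
  rw [← Finset.mul_sum] at h2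
  have h3 := sum_inv_le M
  have h4 : 500 * (1 + Real.log M) * ∑ n ∈ Finset.Icc 1 M, (1 / (n : ℝ)) ≤
      500 * (1 + Real.log M) * (1 + Real.log M) := by gcongr
  nlinarith

lemma sum_inv_abs_sub_le (M n : ℕ) (hn : n ∈ Finset.Icc 1 M) :
    ∑ m ∈ Finset.Icc 1 M, 1 / |(n : ℝ) - m| ≤ 2 * (1 + Real.log M) := by
  rw [Finset.mem_Icc] at hn
  have key : ∀ (s : Finset ℕ) (g : ℕ → ℕ), Set.InjOn g s → (∀ m ∈ s, g m ∈ Finset.Icc 1 M) →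
      (∀ m ∈ s, |(n : ℝ) - m| = g m) → ∑ m ∈ s, 1 / |(n : ℝ) - m| ≤ 1 + Real.log M := by
    intro s g hg hm he
    rw [Finset.sum_congr rfl (fun m hm => by rw [he m hm] : ∀ m ∈ s, 1 / |(n : ℝ) - m| = 1 / (g m : ℝ)),
      ← Finset.sum_image (f := fun k : ℕ => 1 / (k : ℝ)) hg]
    refine le_trans (Finset.sum_le_sum_of_subset_of_nonneg ?_ ?_) (sum_inv_le M)
    · exact Finset.image_subset_iff.2 hm
    · intros; positivity
  rw [← Finset.sum_filter_add_sum_filter_not _ (fun m => m < n)]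
  have h1 : ∑ m ∈ (Finset.Icc 1 M).filter (fun m => m < n), 1 / |(n : ℝ) - m| ≤ 1 + Real.log M := by
    apply key _ (fun m => n - m)
    · intro a ha b hb hab
      simp only [Finset.coe_filter, Finset.mem_Icc, Set.mem_ofPred_eq] at ha hb
      simp only at hab
      omega
    · intro m hm
      simp only [Finset.mem_filter, Finset.mem_Icc] at hm ⊢
      omega
    · intro m hm
      simp only [Finset.mem_filter, Finset.mem_Icc] at hm
      have : (m : ℝ) < n := by exact_mod_cast hm.2
      rw [abs_of_pos (by linarith), Nat.cast_sub hm.2.le]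
  have h2 : ∑ m ∈ (Finset.Icc 1 M).filter (fun m => ¬ m < n), 1 / |(n : ℝ) - m| ≤ 1 + Real.log M := by
    have : ∑ m ∈ (Finset.Icc 1 M).filter (fun m => ¬ m < n), 1 / |(n : ℝ) - m| =
        ∑ m ∈ (Finset.Icc 1 M).filter (fun m => n < m), 1 / |(n : ℝ) - m| := by
      symm
      apply Finset.sum_subset
      · intro m hm
        simp only [Finset.mem_filter] at hm ⊢
        exact ⟨hm.1, by omega⟩
      · intro m hm hm'
        simp only [Finset.mem_filter, not_and] at hm hm'
        have h3 := hm' hm.1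
        obtain rfl : m = n := by omega
        simp
    rw [this]
    apply key _ (fun m => m - n)
    · intro a ha b hb hab
      simp only [Finset.coe_filter, Finset.mem_Icc, Set.mem_ofPred_eq] at ha hb
      simp only at hab
      omega
    · intro m hm
      simp only [Finset.mem_filter, Finset.mem_Icc] at hm ⊢
      omega
    · intro m hm
      simp only [Finset.mem_filter, Finset.mem_Icc] at hm
      have : (n : ℝ) < m := by exact_mod_cast hm.2
      rw [abs_of_neg (by linarith), Nat.cast_sub hm.2.le]
      ring
  linarith

lemma offdiag_sum (M : ℕ) (hM : 1 ≤ M) :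
    ∑ m ∈ Finset.Icc 1 M, ∑ n ∈ Finset.Icc 1 M,
      (r2 m : ℝ) * r2 n * (1 / |(n : ℝ) ^ 2 - (m : ℝ) ^ 2|) ≤ 2000 * (1 + Real.log M) ^ 3 := by
  have hM' : (1 : ℝ) ≤ M := by exact_mod_cast hM
  have hl : 0 ≤ Real.log M := Real.log_nonneg hM'
  set K : ℕ → ℕ → ℝ := fun m n => 1 / |(n : ℝ) ^ 2 - (m : ℝ) ^ 2| with hK
  have hK0 : ∀ m n, 0 ≤ K m n := fun m n => by simp only [hK]; positivity
  have hKs : ∀ m n, K m n = K n m := fun m n => by simp only [hK]; rw [abs_sub_comm]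
  have h1 : ∑ m ∈ Finset.Icc 1 M, ∑ n ∈ Finset.Icc 1 M, (r2 m : ℝ) * r2 n * K m n ≤
      ∑ m ∈ Finset.Icc 1 M, ∑ n ∈ Finset.Icc 1 M,
        ((r2 m : ℝ) ^ 2 * K m n / 2 + (r2 n : ℝ) ^ 2 * K m n / 2) := by
    apply Finset.sum_le_sum; intro m _
    apply Finset.sum_le_sum; intro n _
    nlinarith [mul_nonneg (sq_nonneg ((r2 m : ℝ) - r2 n)) (hK0 m n)]
  have h2 : ∑ m ∈ Finset.Icc 1 M, ∑ n ∈ Finset.Icc 1 M,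
        ((r2 m : ℝ) ^ 2 * K m n / 2 + (r2 n : ℝ) ^ 2 * K m n / 2) =
      ∑ m ∈ Finset.Icc 1 M, (r2 m : ℝ) ^ 2 * ∑ n ∈ Finset.Icc 1 M, K m n := by
    simp only [Finset.sum_add_distrib]
    rw [Finset.sum_comm (f := fun m n => (r2 n : ℝ) ^ 2 * K m n / 2), ← Finset.sum_add_distrib]
    apply Finset.sum_congr rfl; intro m _
    rw [← Finset.sum_add_distrib, Finset.mul_sum]
    apply Finset.sum_congr rfl; intro n _
    rw [hKs n m]; ring
  have h3 : ∑ m ∈ Finset.Icc 1 M, (r2 m : ℝ) ^ 2 * ∑ n ∈ Finset.Icc 1 M, K m n ≤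
      ∑ m ∈ Finset.Icc 1 M, (r2 m : ℝ) ^ 2 / m * (2 * (1 + Real.log M)) := by
    apply Finset.sum_le_sum; intro m hm
    have hm1 : (1 : ℝ) ≤ m := by exact_mod_cast (Finset.mem_Icc.1 hm).1
    have h4 : ∑ n ∈ Finset.Icc 1 M, K m n ≤ ∑ n ∈ Finset.Icc 1 M, (1 / (m : ℝ)) * (1 / |(m : ℝ) - n|) := by
      apply Finset.sum_le_sum; intro n hn
      have hn1 : (1 : ℝ) ≤ n := by exact_mod_cast (Finset.mem_Icc.1 hn).1
      simp only [hK]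
      by_cases hmn : m = n
      · subst hmn; simp
      · have hne : (m : ℝ) - n ≠ 0 := by
          rw [sub_ne_zero]; exact_mod_cast hmn
        have : |(n : ℝ) ^ 2 - (m : ℝ) ^ 2| = (n + m) * |(m : ℝ) - n| := by
          rw [show (n : ℝ) ^ 2 - (m : ℝ) ^ 2 = (n + m) * (n - m) by ring, abs_mul,
            abs_of_pos (by linarith : (0 : ℝ) < n + m), abs_sub_comm]
        rw [this, one_div_mul_one_div]
        have h5 : 0 < |(m : ℝ) - n| := abs_pos.2 hne
        apply one_div_le_one_div_of_le (by positivity)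
        gcongr
        linarith
    rw [← Finset.mul_sum] at h4
    have h5 := sum_inv_abs_sub_le M m hm
    calc _ ≤ (r2 m : ℝ) ^ 2 * (1 / (m : ℝ) * (2 * (1 + Real.log M))) := by
          gcongr
          exact h4.trans (by gcongr)
      _ = _ := by ring
  rw [← Finset.sum_mul] at h3
  have h4 := sum_r2_sq_div M hM
  calc _ ≤ _ := h1.trans (h2.le.trans h3)
    _ ≤ 1000 * (1 + Real.log M) ^ 2 * (2 * (1 + Real.log M)) := by gcongr
    _ = _ := by ring

lemma osc_bound {m n c a b : ℝ} (hm : 0 < m) (hmn : m < n) (hc : 0 < c) (hna : n ≤ a)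
    (hab : a ≤ b) :
    |∫ N in a..b, Real.cos (c * (√(N ^ 2 - m ^ 2) - √(N ^ 2 - n ^ 2)))| ≤
      4 * b ^ 2 / (c * (n ^ 2 - m ^ 2)) := by
  set A : ℝ → ℝ := fun N => √(N ^ 2 - m ^ 2) with hA
  set B : ℝ → ℝ := fun N => √(N ^ 2 - n ^ 2) with hB
  have hd : 0 < n ^ 2 - m ^ 2 := by nlinarith
  set e := c * (n ^ 2 - m ^ 2) with he
  have he0 : 0 < e := by positivity
  set h : ℝ → ℝ := fun N => A N * B N * (A N + B N) / (e * N) with hh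
  set φ : ℝ → ℝ := fun N => c * (A N - B N) with hφ
  have hAc : Continuous A := by simp only [hA]; fun_prop
  have hBc : Continuous B := by simp only [hB]; fun_prop
  have hφc : Continuous φ := by simp only [hφ]; fun_prop
  have hhc : ContinuousOn h (Set.Icc a b) := by
    simp only [hh]
    apply ContinuousOn.div
    · fun_prop
    · fun_prop
    · intro x hx
      have : 0 < x := by linarith [hx.1]
      positivity
  set J : ℝ → ℝ := fun N => ∫ t in a..N, Real.cos (φ t) with hJ
  have hcc : Continuous (fun t => Real.cos (φ t)) := by fun_prop
  have hJd : ∀ x, HasDerivAt J (Real.cos (φ x)) x := fun x =>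
    intervalIntegral.integral_hasDerivAt_right (hcc.intervalIntegrable _ _)
      (hcc.stronglyMeasurableAtFilter _ _) hcc.continuousAt
  have hJc : Continuous J := continuous_iff_continuousAt.2 fun x => (hJd x).continuousAt
  have der : ∀ x ∈ Set.Ioo a b, ∃ h' : ℝ, 0 ≤ h' ∧ HasDerivAt h h' x ∧
      HasDerivAt (fun N => J N + h N * Real.sin (φ N)) (h' * Real.sin (φ x)) x := by
    intro x hx
    have hxn : n < x := by linarith [hx.1]
    have hx0 : 0 < x := by linarith
    have hB2 : 0 < x ^ 2 - n ^ 2 := by nlinarith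
    have hA2 : 0 < x ^ 2 - m ^ 2 := by nlinarith
    have hB0 : 0 < B x := Real.sqrt_pos.2 hB2
    have hA0 : 0 < A x := Real.sqrt_pos.2 hA2
    have hBs : B x ^ 2 = x ^ 2 - n ^ 2 := Real.sq_sqrt hB2.le
    have hAs : A x ^ 2 = x ^ 2 - m ^ 2 := Real.sq_sqrt hA2.le
    have hAd : HasDerivAt A (x / A x) x := by
      have := ((hasDerivAt_pow 2 x).sub_const (m ^ 2)).sqrt hA2.ne'
      convert this using 1
      simp only [hA]; field_simp; simp [mul_comm]
    have hBd : HasDerivAt B (x / B x) x := by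
      have := ((hasDerivAt_pow 2 x).sub_const (n ^ 2)).sqrt hB2.ne'
      convert this using 1
      simp only [hB]; field_simp; simp [mul_comm]
    have hhd := ((hAd.mul hBd).mul (hAd.add hBd)).div ((hasDerivAt_id x).const_mul e)
      (by simp; exact ⟨he0.ne', hx0.ne'⟩)
    have hφd : HasDerivAt φ (c * (x / A x - x / B x)) x := (hAd.sub hBd).const_mul c
    have hφh : h x * (c * (x / A x - x / B x)) = -1 := by
      simp only [hh]
      have : n ^ 2 - m ^ 2 = A x ^ 2 - B x ^ 2 := by rw [hAs, hBs]; ring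
      have h9 : A x ^ 2 - B x ^ 2 ≠ 0 := by rw [← this]; exact hd.ne'
      rw [he, this]
      field_simp
      ring
    refine ⟨2 * B x / e + A x ^ 2 / B x / e + B x ^ 2 / A x / e + 2 * A x / e
      - A x * B x * (A x + B x) / (e * x ^ 2), ?_, ?_, ?_⟩
    · have h1 : A x * B x ≤ x ^ 2 := by nlinarith [sq_nonneg (A x - B x), sq_nonneg n, sq_nonneg m]
      have h2 : A x * B x * (A x + B x) / (e * x ^ 2) ≤ (A x + B x) / e := by
        rw [div_le_div_iff₀ (by positivity) he0]
        nlinarith [mul_le_mul_of_nonneg_right h1 (by positivity : 0 ≤ (A x + B x) * e)]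
      have h3 : (A x + B x) / e ≤ 2 * B x / e + 2 * A x / e := by
        rw [← add_div]; apply div_le_div_of_nonneg_right _ he0.le; linarith
      have h4 : 0 ≤ A x ^ 2 / B x / e := by positivity
      have h5 : 0 ≤ B x ^ 2 / A x / e := by positivity
      linarith
    · refine (show HasDerivAt h _ x from hhd).congr_deriv ?_
      simp only [id, Pi.mul_apply, Pi.add_apply]
      field_simp
      ring
    · have hhd' : HasDerivAt h (2 * B x / e + A x ^ 2 / B x / e + B x ^ 2 / A x / e + 2 * A x / e
          - A x * B x * (A x + B x) / (e * x ^ 2)) x := by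
        refine (show HasDerivAt h _ x from hhd).congr_deriv ?_
        simp only [id, Pi.mul_apply, Pi.add_apply]
        field_simp
        ring
      have := (hJd x).add (hhd'.mul hφd.sin)
      refine (show HasDerivAt (fun N => J N + h N * Real.sin (φ N)) _ x from this).congr_deriv ?_
      linear_combination (Real.cos (φ x)) * hφh
  have hPc : ContinuousOn (fun N => J N + h N * Real.sin (φ N)) (Set.Icc a b) := by
    apply ContinuousOn.add hJc.continuousOn
    exact hhc.mul (by fun_prop)
  have mono1 : MonotoneOn (fun N => h N - (J N + h N * Real.sin (φ N))) (Set.Icc a b) := by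
    apply monotoneOn_of_deriv_nonneg (convex_Icc a b) (hhc.sub hPc)
    · rw [interior_Icc]; intro x hx
      obtain ⟨h', -, h1, h2⟩ := der x hx
      exact (h1.sub h2).differentiableAt.differentiableWithinAt
    · rw [interior_Icc]; intro x hx
      obtain ⟨h', h0, h1, h2⟩ := der x hx
      have := (h1.sub h2).deriv
      change 0 ≤ deriv (h - (fun N => J N + h N * Real.sin (φ N))) x
      rw [this]
      nlinarith [Real.sin_le_one (φ x)]
  have mono2 : MonotoneOn (fun N => h N + (J N + h N * Real.sin (φ N))) (Set.Icc a b) := by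
    apply monotoneOn_of_deriv_nonneg (convex_Icc a b) (hhc.add hPc)
    · rw [interior_Icc]; intro x hx
      obtain ⟨h', -, h1, h2⟩ := der x hx
      exact (h1.add h2).differentiableAt.differentiableWithinAt
    · rw [interior_Icc]; intro x hx
      obtain ⟨h', h0, h1, h2⟩ := der x hx
      have := (h1.add h2).deriv
      change 0 ≤ deriv (h + (fun N => J N + h N * Real.sin (φ N))) x
      rw [this]
      nlinarith [Real.neg_one_le_sin (φ x)]
  have ma : a ∈ Set.Icc a b := ⟨le_rfl, hab⟩
  have mb : b ∈ Set.Icc a b := ⟨hab, le_rfl⟩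
  have e1 := mono1 ma mb hab
  have e2 := mono2 ma mb hab
  have hJa : J a = 0 := by simp [hJ]
  simp only [hJa] at e1 e2
  have ha0 : 0 < a := by linarith
  have hb0 : 0 < b := by linarith
  have hha : 0 ≤ h a := by simp only [hh, hA, hB]; positivity
  have hhb0 : 0 ≤ h b := by simp only [hh, hA, hB]; positivity
  have hhb : h b ≤ 2 * b ^ 2 / e := by
    have hAb : A b ≤ b := by
      simp only [hA]; rw [Real.sqrt_le_left hb0.le]; nlinarith
    have hBb : B b ≤ b := by
      simp only [hB]; rw [Real.sqrt_le_left hb0.le]; nlinarith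
    have hA0 : 0 ≤ A b := Real.sqrt_nonneg _
    have hB0 : 0 ≤ B b := Real.sqrt_nonneg _
    calc h b ≤ b * b * (b + b) / (e * b) := by simp only [hh]; gcongr
      _ = _ := by field_simp; ring
  change |J b| ≤ _
  have s1 := Real.sin_le_one (φ a)
  have s2 := Real.neg_one_le_sin (φ a)
  have s3 := Real.sin_le_one (φ b)
  have s4 := Real.neg_one_le_sin (φ b)
  have : 4 * b ^ 2 / e = 2 * (2 * b ^ 2 / e) := by ring
  rw [this, abs_le]
  constructor <;> nlinarith

lemma ii_of_bdd {f : ℝ → ℝ} (hf : Measurable f) {C : ℝ} (hb : ∀ x, |f x| ≤ C) (a b : ℝ) :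
    IntervalIntegrable f volume a b := by
  rw [intervalIntegrable_iff]
  refine Measure.integrableOn_of_bounded (M := C) ?_ hf.aestronglyMeasurable ?_
  · simp [Set.uIoc]
  · exact Eventually.of_forall fun x => hb x

lemma ii_sum {ι : Type*} {s : Finset ι} {f : ι → ℝ → ℝ} {a b : ℝ}
    (h : ∀ i ∈ s, IntervalIntegrable (f i) volume a b) :
    IntervalIntegrable (fun x => ∑ i ∈ s, f i x) volume a b := by
  have e : (fun x => ∑ i ∈ s, f i x) = ∑ i ∈ s, f i := by ext x; simp
  rw [e]
  exact IntervalIntegrable.sum s h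

/-- Pair kernel. -/
def pairK (k m n : ℕ) (N : ℝ) : ℝ :=
  if (m : ℝ) ≤ N ∧ (n : ℝ) ≤ N then
    Real.cos (2 * π * k * (√(N ^ 2 - (m : ℝ) ^ 2) - √(N ^ 2 - (n : ℝ) ^ 2))) else 0

lemma pairK_meas (k m n : ℕ) : Measurable (pairK k m n) := by
  unfold pairK
  refine Measurable.ite ?_ (by fun_prop) measurable_const
  exact (measurableSet_le measurable_const measurable_id).inter
    (measurableSet_le measurable_const measurable_id)

lemma pairK_bdd (k m n : ℕ) (N : ℝ) : |pairK k m n N| ≤ 1 := by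
  unfold pairK
  split_ifs
  · exact Real.abs_cos_le_one _
  · simp

lemma pairK_symm (k m n : ℕ) (N : ℝ) : pairK k m n N = pairK k n m N := by
  unfold pairK
  rw [← Real.cos_neg]
  simp only [and_comm]
  congr 2
  ring

/-- Sine summand. -/
def snK (k m : ℕ) (N : ℝ) : ℝ :=
  if (m : ℝ) ≤ N then Real.sin (2 * π * k * √(N ^ 2 - (m : ℝ) ^ 2)) else 0

/-- Cosine summand. -/
def csK (k m : ℕ) (N : ℝ) : ℝ :=
  if (m : ℝ) ≤ N then Real.cos (2 * π * k * √(N ^ 2 - (m : ℝ) ^ 2)) else 0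

lemma snK_meas (k m : ℕ) : Measurable (snK k m) := by
  unfold snK
  refine Measurable.ite ?_ (by fun_prop) measurable_const
  exact (measurableSet_le measurable_const measurable_id)

lemma snK_bdd (k m : ℕ) (N : ℝ) : |snK k m N| ≤ 1 := by
  unfold snK
  split_ifs
  · exact Real.abs_sin_le_one _
  · simp

lemma pair_eq (k m n : ℕ) (N : ℝ) :
    snK k m N * snK k n N + csK k m N * csK k n N = pairK k m n N := by
  unfold snK csK pairK
  by_cases h1 : (m : ℝ) ≤ N <;> by_cases h2 : (n : ℝ) ≤ N <;> simp [h1, h2]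
  rw [mul_sub, Real.cos_sub]; ring

lemma pair_lt (k m n M : ℕ) (hk : 1 ≤ k) (hm : 1 ≤ m) (hmn : m < n) (hn : n ≤ M) :
    |∫ N in (0 : ℝ)..M, pairK k m n N| ≤ (M : ℝ) ^ 2 / k * (1 / |(n : ℝ) ^ 2 - (m : ℝ) ^ 2|) := by
  have hm' : (1 : ℝ) ≤ m := by exact_mod_cast hm
  have hk' : (1 : ℝ) ≤ k := by exact_mod_cast hk
  have hmn' : (m : ℝ) < n := by exact_mod_cast hmn
  have hn' : (n : ℝ) ≤ M := by exact_mod_cast hn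
  have hii := fun a b => ii_of_bdd (pairK_meas k m n) (pairK_bdd k m n) a b
  rw [← intervalIntegral.integral_add_adjacent_intervals (hii 0 n) (hii n M)]
  have h1 : ∫ N in (0 : ℝ)..n, pairK k m n N = 0 := by
    rw [intervalIntegral.integral_of_le (by positivity), integral_Ioc_eq_integral_Ioo]
    apply setIntegral_eq_zero_of_forall_eq_zero
    intro x hx
    unfold pairK
    rw [if_neg]
    intro h
    linarith [hx.2, h.2]
  have h2 : ∫ N in (n : ℝ)..M, pairK k m n N =
      ∫ N in (n : ℝ)..M, Real.cos (2 * π * k * (√(N ^ 2 - (m : ℝ) ^ 2) - √(N ^ 2 - (n : ℝ) ^ 2))) := by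
    apply intervalIntegral.integral_congr
    intro x hx
    rw [Set.uIcc_of_le hn'] at hx
    unfold pairK
    simp only
    rw [if_pos ⟨by linarith [hx.1], hx.1⟩]
  rw [h1, h2, zero_add]
  have hpi := Real.pi_gt_three
  refine (osc_bound (by linarith) hmn' (by positivity) le_rfl hn').trans ?_
  have hd : 0 < (n : ℝ) ^ 2 - (m : ℝ) ^ 2 := by nlinarith
  rw [abs_of_pos hd, div_mul_div_comm, mul_one, div_le_div_iff₀ (by positivity) (by positivity)]
  have : 0 ≤ (M : ℝ) ^ 2 * (k * ((n : ℝ) ^ 2 - (m : ℝ) ^ 2)) := by positivity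
  nlinarith

lemma pair_int (k m n M : ℕ) (hk : 1 ≤ k) (hm : m ∈ Finset.Icc 1 M) (hn : n ∈ Finset.Icc 1 M) :
    ∫ N in (0 : ℝ)..M, pairK k m n N ≤
      (if m = n then (M : ℝ) else 0) + (M : ℝ) ^ 2 / k * (1 / |(n : ℝ) ^ 2 - (m : ℝ) ^ 2|) := by
  rw [Finset.mem_Icc] at hm hn
  rcases lt_trichotomy m n with h | h | h
  · rw [if_neg h.ne, zero_add]
    exact (le_abs_self _).trans (pair_lt k m n M hk hm.1 h hn.2)
  · subst h
    simp only [if_true, sub_self, abs_zero, div_zero, mul_zero, add_zero]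
    calc ∫ N in (0 : ℝ)..M, pairK k m m N ≤ ∫ N in (0 : ℝ)..M, (1 : ℝ) := by
          apply intervalIntegral.integral_mono (by positivity)
          · exact ii_of_bdd (pairK_meas k m m) (pairK_bdd k m m) _ _
          · exact intervalIntegrable_const
          · intro x; exact (le_abs_self _).trans (pairK_bdd k m m x)
      _ = M := by simp
  · rw [if_neg h.ne', zero_add, abs_sub_comm]
    simp only [pairK_symm k m n]
    exact (le_abs_self _).trans (pair_lt k n m M hk hn.1 h hm.2)

/-- Exponential sum (sine part). -/
def FK (M k : ℕ) (N : ℝ) : ℝ := ∑ m ∈ Finset.Icc 1 M, (r2 m : ℝ) * snK k m N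

lemma FK_meas (M k : ℕ) : Measurable (FK M k) := by
  unfold FK
  exact Finset.measurable_sum _ fun m _ => (snK_meas k m).const_mul _

lemma FK_bdd (M k : ℕ) (N : ℝ) : |FK M k N| ≤ ∑ m ∈ Finset.Icc 1 M, (r2 m : ℝ) := by
  unfold FK
  refine (Finset.abs_sum_le_sum_abs _ _).trans (Finset.sum_le_sum fun m _ => ?_)
  rw [abs_mul, Nat.abs_cast]
  nlinarith [snK_bdd k m N, (Nat.cast_nonneg (r2 m) : (0 : ℝ) ≤ _)]

lemma FK_sq_ii (M k : ℕ) (a b : ℝ) :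
    IntervalIntegrable (fun N => FK M k N ^ 2) volume a b := by
  apply ii_of_bdd ((FK_meas M k).pow_const 2) (C := (∑ m ∈ Finset.Icc 1 M, (r2 m : ℝ)) ^ 2)
  intro x
  rw [abs_pow]
  have := FK_bdd M k x
  gcongr

lemma FK_sq_int (M k : ℕ) (hM : 1 ≤ M) (hk : 1 ≤ k) :
    ∫ N in (0 : ℝ)..M, FK M k N ^ 2 ≤ 500 * (M : ℝ) ^ 2 * (1 + Real.log M) +
      2000 * (M : ℝ) ^ 2 * (1 + Real.log M) ^ 3 * (1 / k) := by
  have hpt : ∀ N, FK M k N ^ 2 ≤ ∑ m ∈ Finset.Icc 1 M, ∑ n ∈ Finset.Icc 1 M,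
      (r2 m : ℝ) * r2 n * pairK k m n N := by
    intro N
    have : ∑ m ∈ Finset.Icc 1 M, ∑ n ∈ Finset.Icc 1 M, (r2 m : ℝ) * r2 n * pairK k m n N =
        FK M k N ^ 2 + (∑ m ∈ Finset.Icc 1 M, (r2 m : ℝ) * csK k m N) ^ 2 := by
      unfold FK
      rw [sq, sq, Finset.sum_mul_sum, Finset.sum_mul_sum, ← Finset.sum_add_distrib]
      apply Finset.sum_congr rfl; intro m _
      rw [← Finset.sum_add_distrib]
      apply Finset.sum_congr rfl; intro n _
      rw [← pair_eq]; ring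
    rw [this]
    nlinarith [sq_nonneg (∑ m ∈ Finset.Icc 1 M, (r2 m : ℝ) * csK k m N)]
  have hii : ∀ m n, IntervalIntegrable (fun N => (r2 m : ℝ) * r2 n * pairK k m n N) volume 0 M :=
    fun m n => (ii_of_bdd (pairK_meas k m n) (pairK_bdd k m n) _ _).const_mul _
  have hii2 : ∀ m, IntervalIntegrable (fun N => ∑ n ∈ Finset.Icc 1 M,
      (r2 m : ℝ) * r2 n * pairK k m n N) volume 0 M := by
    intro m
    exact ii_sum (fun n _ => hii m n)
  have hii3 : IntervalIntegrable (fun N => ∑ m ∈ Finset.Icc 1 M, ∑ n ∈ Finset.Icc 1 M,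
      (r2 m : ℝ) * r2 n * pairK k m n N) volume 0 M := by
    exact ii_sum (fun m _ => hii2 m)
  have h1 : ∫ N in (0 : ℝ)..M, FK M k N ^ 2 ≤ ∑ m ∈ Finset.Icc 1 M, ∑ n ∈ Finset.Icc 1 M,
      (r2 m : ℝ) * r2 n * ∫ N in (0 : ℝ)..M, pairK k m n N := by
    refine (intervalIntegral.integral_mono (by positivity) (FK_sq_ii M k _ _) hii3 hpt).trans ?_
    rw [intervalIntegral.integral_finsetSum (fun m _ => hii2 m)]
    apply le_of_eq
    apply Finset.sum_congr rfl; intro m _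
    rw [intervalIntegral.integral_finsetSum (fun n _ => hii m n)]
    apply Finset.sum_congr rfl; intro n _
    rw [intervalIntegral.integral_const_mul]
  have h2 : ∑ m ∈ Finset.Icc 1 M, ∑ n ∈ Finset.Icc 1 M,
      (r2 m : ℝ) * r2 n * ∫ N in (0 : ℝ)..M, pairK k m n N ≤
      ∑ m ∈ Finset.Icc 1 M, ∑ n ∈ Finset.Icc 1 M,
      ((if m = n then (r2 m : ℝ) ^ 2 * M else 0) +
        (M : ℝ) ^ 2 / k * ((r2 m : ℝ) * r2 n * (1 / |(n : ℝ) ^ 2 - (m : ℝ) ^ 2|))) := by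
    apply Finset.sum_le_sum; intro m hm
    apply Finset.sum_le_sum; intro n hn
    refine (mul_le_mul_of_nonneg_left (pair_int k m n M hk hm hn) (by positivity)).trans ?_
    apply le_of_eq
    by_cases h : m = n
    · subst h; simp only [if_true, sub_self, abs_zero, div_zero, mul_zero, add_zero]; ring
    · simp only [if_neg h]; ring
  refine h1.trans (h2.trans ?_)
  simp only [Finset.sum_add_distrib, ← Finset.mul_sum]
  have h3 : ∑ m ∈ Finset.Icc 1 M, ∑ n ∈ Finset.Icc 1 M, (if m = n then (r2 m : ℝ) ^ 2 * M else 0)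
      = (∑ m ∈ Finset.Icc 1 M, (r2 m : ℝ) ^ 2) * M := by
    rw [Finset.sum_mul]
    apply Finset.sum_congr rfl; intro m hm
    rw [Finset.sum_ite_eq, if_pos hm]
  rw [h3]
  have h4 := sum_r2_sq M hM
  have h5 := offdiag_sum M hM
  have h6 : (∑ m ∈ Finset.Icc 1 M, (r2 m : ℝ) ^ 2) * M ≤ 500 * M * (1 + Real.log M) * M := by gcongr
  have h7 := mul_le_mul_of_nonneg_left h5 (by positivity : (0 : ℝ) ≤ (M : ℝ) ^ 2 / k)
  refine (add_le_add h6 h7).trans (le_of_eq ?_)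
  ring

lemma cv_bound {f g g' : ℝ → ℝ} {a b A B c : ℝ} (hc : 0 < c) (hf0 : ∀ x, 0 ≤ f x)
    (hfm : Measurable f) (hf : IntegrableOn f (Set.Icc A B))
    (hg : ∀ x ∈ Set.Ioo a b, HasDerivAt g (g' x) x) (hg' : ∀ x ∈ Set.Ioo a b, c ≤ g' x)
    (hmap : ∀ x ∈ Set.Ioo a b, g x ∈ Set.Icc A B) :
    IntegrableOn (fun x => f (g x)) (Set.Ioo a b) ∧
      c * ∫ x in Set.Ioo a b, f (g x) ≤ ∫ x in Set.Icc A B, f x := by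
  have hcont : ContinuousOn g (Set.Ioo a b) := fun x hx => (hg x hx).continuousAt.continuousWithinAt
  have hmono : StrictMonoOn g (Set.Ioo a b) := by
    apply strictMonoOn_of_deriv_pos (convex_Ioo a b) hcont
    rw [interior_Ioo]
    intro x hx
    rw [(hg x hx).deriv]
    linarith [hg' x hx]
  have hinj := hmono.injOn
  have hw : ∀ x ∈ Set.Ioo a b, HasDerivWithinAt g (g' x) (Set.Ioo a b) x :=
    fun x hx => (hg x hx).hasDerivWithinAt
  have himg : g '' Set.Ioo a b ⊆ Set.Icc A B := by
    rintro _ ⟨x, hx, rfl⟩; exact hmap x hx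
  have hfi : IntegrableOn f (g '' Set.Ioo a b) := hf.mono_set himg
  have hi := (integrableOn_image_iff_integrableOn_abs_deriv_smul measurableSet_Ioo hw hinj f).1 hfi
  have he := integral_image_eq_integral_abs_deriv_smul measurableSet_Ioo hw hinj f
  have hle : ∀ x ∈ Set.Ioo a b, c * f (g x) ≤ |g' x| • f (g x) := by
    intro x hx
    rw [smul_eq_mul]
    exact mul_le_mul_of_nonneg_right ((hg' x hx).trans (le_abs_self _)) (hf0 _)
  have hmeas : AEStronglyMeasurable (fun x => f (g x)) (volume.restrict (Set.Ioo a b)) :=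
    (hfm.comp_aemeasurable (hcont.aemeasurable measurableSet_Ioo)).aestronglyMeasurable
  have hint : IntegrableOn (fun x => c * f (g x)) (Set.Ioo a b) := by
    refine Integrable.mono' hi (hmeas.const_mul c) ?_
    filter_upwards [ae_restrict_mem measurableSet_Ioo] with x hx
    rw [Real.norm_of_nonneg (mul_nonneg hc.le (hf0 _))]
    exact hle x hx
  constructor
  · have := hint.const_mul c⁻¹
    refine this.congr (Eventually.of_forall fun x => ?_)
    simp only
    field_simp
  · rw [← integral_const_mul]
    refine (setIntegral_mono_on hint hi measurableSet_Ioo hle).trans ?_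
    rw [← he]
    exact setIntegral_mono_set hf (Eventually.of_forall fun x => hf0 x) himg.eventuallyLE

/-- Truncation remainder of the Fourier series of the sawtooth. -/
def RK (K : ℕ) (t : ℝ) : ℝ :=
  sawtooth t + ∑ k ∈ Finset.Icc 1 K, Real.sin (2 * π * k * t) / (π * k)

lemma sawtooth_meas : Measurable sawtooth := by
  unfold sawtooth
  have : Measurable (fun t : ℝ => ((⌊t⌋ : ℤ) : ℝ)) :=
    (measurable_from_top (f := fun n : ℤ => (n : ℝ))).comp Int.measurable_floor
  exact (measurable_id.sub this).sub_const _

lemma sawtooth_bdd (t : ℝ) : |sawtooth t| ≤ 1 := by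
  unfold sawtooth
  rw [abs_le]
  constructor <;> linarith [Int.floor_le t, Int.lt_floor_add_one t]

lemma RK_meas (K : ℕ) : Measurable (RK K) := by
  unfold RK
  exact sawtooth_meas.add (Finset.measurable_sum _ fun k _ => by fun_prop)

lemma RK_bdd (K : ℕ) (t : ℝ) : |RK K t| ≤ 1 + K := by
  unfold RK
  refine (abs_add_le _ _).trans (add_le_add (sawtooth_bdd t) ?_)
  refine (Finset.abs_sum_le_sum_abs _ _).trans ?_
  calc _ ≤ ∑ k ∈ Finset.Icc 1 K, (1 : ℝ) := by
        apply Finset.sum_le_sum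
        intro k hk
        have hk1 : (1 : ℝ) ≤ k := by exact_mod_cast (Finset.mem_Icc.1 hk).1
        have hp : 1 ≤ π * k := by nlinarith [Real.pi_gt_three]
        rw [abs_div, abs_of_pos (by linarith : 0 < π * (k : ℝ)), div_le_one (by linarith)]
        exact (Real.abs_sin_le_one _).trans hp
    _ = K := by simp

lemma RK_sq_ii (K : ℕ) (a b : ℝ) : IntervalIntegrable (fun t => RK K t ^ 2) volume a b := by
  apply ii_of_bdd ((RK_meas K).pow_const 2) (C := (1 + (K : ℝ)) ^ 2)
  intro x
  rw [abs_pow]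
  have := RK_bdd K x
  gcongr

lemma RK_periodic (K : ℕ) (t : ℝ) : RK K (t + 1) = RK K t := by
  unfold RK
  congr 1
  · unfold sawtooth
    rw [Int.floor_add_one]; push_cast; ring
  · apply Finset.sum_congr rfl
    intro k _
    rw [show 2 * π * k * (t + 1) = 2 * π * k * t + (k : ℕ) * (2 * π) by ring,
      Real.sin_add_nat_mul_two_pi]

lemma int_cos (j : ℤ) (hj : j ≠ 0) : ∫ t in (0 : ℝ)..1, Real.cos (2 * π * j * t) = 0 := by
  have hj' : 2 * π * (j : ℝ) ≠ 0 := by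
    have : (j : ℝ) ≠ 0 := by exact_mod_cast hj
    have := Real.pi_pos
    positivity
  rw [intervalIntegral.integral_comp_mul_left _ hj', integral_cos]
  have : Real.sin (2 * π * j * 1) = 0 := by
    rw [show 2 * π * (j : ℝ) * 1 = ((2 * j : ℤ) : ℝ) * π by push_cast; ring, Real.sin_int_mul_pi]
  rw [this]; simp

lemma int_sin_sin (k l : ℕ) (hk : 1 ≤ k) (hkl : k < l) :
    ∫ t in (0 : ℝ)..1, Real.sin (2 * π * k * t) * Real.sin (2 * π * l * t) = 0 := by
  have e : ∀ t : ℝ, Real.sin (2 * π * k * t) * Real.sin (2 * π * l * t) =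
      (1 / 2) * (Real.cos (2 * π * ((k - l : ℤ) : ℝ) * t) - Real.cos (2 * π * ((k + l : ℤ) : ℝ) * t)) := by
    intro t
    push_cast
    rw [show 2 * π * ((k : ℝ) - l) * t = 2 * π * k * t - 2 * π * l * t by ring,
      show 2 * π * ((k : ℝ) + l) * t = 2 * π * k * t + 2 * π * l * t by ring,
      Real.cos_sub, Real.cos_add]
    ring
  simp only [e]
  rw [intervalIntegral.integral_const_mul, intervalIntegral.integral_sub
    (Continuous.intervalIntegrable (by fun_prop) _ _) (Continuous.intervalIntegrable (by fun_prop) _ _),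
    int_cos _ (by omega), int_cos _ (by omega)]
  simp

lemma int_sin_sq (k : ℕ) (hk : 1 ≤ k) :
    ∫ t in (0 : ℝ)..1, Real.sin (2 * π * k * t) ^ 2 = 1 / 2 := by
  have e : ∀ t : ℝ, Real.sin (2 * π * k * t) ^ 2 =
      (1 / 2) * (1 - Real.cos (2 * π * ((2 * k : ℤ) : ℝ) * t)) := by
    intro t
    push_cast
    rw [show 2 * π * (2 * (k : ℝ)) * t = 2 * (2 * π * k * t) by ring, Real.cos_two_mul, Real.sin_sq]
    ring
  simp only [e]
  rw [intervalIntegral.integral_const_mul, intervalIntegral.integral_sub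
    (Continuous.intervalIntegrable (by fun_prop) _ _) (Continuous.intervalIntegrable (by fun_prop) _ _),
    int_cos _ (by omega)]
  simp

lemma int_lin_sin (k : ℕ) (hk : 1 ≤ k) :
    ∫ t in (0 : ℝ)..1, (t - 1 / 2) * Real.sin (2 * π * k * t) = -1 / (2 * π * k) := by
  have hk' : (1 : ℝ) ≤ k := by exact_mod_cast hk
  have hp := Real.pi_pos
  have hc : 2 * π * (k : ℝ) ≠ 0 := by positivity
  set c := 2 * π * (k : ℝ) with hcdef
  have hd : ∀ t ∈ Set.uIcc (0 : ℝ) 1, HasDerivAt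
      (fun t => -(t - 1 / 2) * Real.cos (c * t) / c + Real.sin (c * t) / c ^ 2)
      ((t - 1 / 2) * Real.sin (c * t)) t := by
    intro t _
    have h1 : HasDerivAt (fun t => c * t) c t := by
      simpa using (hasDerivAt_id t).const_mul c
    have h2 : HasDerivAt (fun t : ℝ => -(t - 1 / 2)) (-1) t := ((hasDerivAt_id t).sub_const _).neg
    have h3 := ((h2.mul h1.cos).div_const c).add (h1.sin.div_const (c ^ 2))
    refine HasDerivAt.congr_deriv (show HasDerivAt
      (fun t => -(t - 1 / 2) * Real.cos (c * t) / c + Real.sin (c * t) / c ^ 2) _ t from h3) ?_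
    field_simp
    ring
  rw [intervalIntegral.integral_eq_sub_of_hasDerivAt hd
    (Continuous.intervalIntegrable (by fun_prop) _ _)]
  have h1 : Real.cos (c * 1) = 1 := by
    rw [hcdef, show 2 * π * (k : ℝ) * 1 = k * (2 * π) by ring, Real.cos_nat_mul_two_pi]
  have h2 : Real.sin (c * 1) = 0 := by
    rw [hcdef, show 2 * π * (k : ℝ) * 1 = ((2 * k : ℕ) : ℝ) * π by push_cast; ring, Real.sin_nat_mul_pi]
  rw [h1, h2]
  simp
  field_simp
  ring

/-- Polynomial version of the remainder on `[0,1]`. -/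
def QK (K : ℕ) (t : ℝ) : ℝ :=
  (t - 1 / 2) + ∑ k ∈ Finset.Icc 1 K, Real.sin (2 * π * k * t) / (π * k)

lemma QK_cont (K : ℕ) : Continuous (QK K) := by
  unfold QK
  fun_prop

lemma QK_sin (K : ℕ) :
    ∫ t in (0 : ℝ)..1, QK K t * Real.sin (2 * π * (K + 1 : ℕ) * t) = -1 / (2 * π * (K + 1 : ℕ)) := by
  have e : ∀ t, QK K t * Real.sin (2 * π * (K + 1 : ℕ) * t) =
      (t - 1 / 2) * Real.sin (2 * π * (K + 1 : ℕ) * t) + ∑ k ∈ Finset.Icc 1 K,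
      (1 / (π * k)) * (Real.sin (2 * π * k * t) * Real.sin (2 * π * (K + 1 : ℕ) * t)) := by
    intro t
    unfold QK
    rw [add_mul, Finset.sum_mul]
    congr 1
    apply Finset.sum_congr rfl; intro k _; ring
  simp only [e]
  rw [intervalIntegral.integral_add (Continuous.intervalIntegrable (by fun_prop) _ _)
    (Continuous.intervalIntegrable (by fun_prop) _ _), int_lin_sin _ (by omega),
    intervalIntegral.integral_finsetSum
      (fun k _ => Continuous.intervalIntegrable (by fun_prop) _ _)]
  rw [Finset.sum_eq_zero, add_zero]
  intro k hk
  rw [Finset.mem_Icc] at hk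
  rw [intervalIntegral.integral_const_mul, int_sin_sin _ _ hk.1 (by omega), mul_zero]

lemma QK_sq (K : ℕ) : ∫ t in (0 : ℝ)..1, QK K t ^ 2 =
    1 / 12 - ∑ k ∈ Finset.Icc 1 K, 1 / (2 * π ^ 2 * (k : ℝ) ^ 2) := by
  induction K with
  | zero =>
    simp [QK]
    norm_num [integral_pow, intervalIntegral.integral_comp_sub_right (fun t : ℝ => t ^ 2)]
  | succ K ih =>
    have e : ∀ t, QK (K + 1) t ^ 2 = QK K t ^ 2 +
        ((2 / (π * (K + 1 : ℕ))) * (QK K t * Real.sin (2 * π * (K + 1 : ℕ) * t)) +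
        (1 / (π * (K + 1 : ℕ)) ^ 2) * Real.sin (2 * π * (K + 1 : ℕ) * t) ^ 2) := by
      intro t
      have : QK (K + 1) t = QK K t + Real.sin (2 * π * (K + 1 : ℕ) * t) / (π * (K + 1 : ℕ)) := by
        unfold QK
        rw [Finset.sum_Icc_succ_top (by omega)]; ring
      rw [this]
      have := Real.pi_pos
      field_simp
      ring
    have hc := QK_cont K
    simp only [e]
    rw [intervalIntegral.integral_add (Continuous.intervalIntegrable (by fun_prop) _ _)
      (Continuous.intervalIntegrable (by fun_prop) _ _),
      intervalIntegral.integral_add (Continuous.intervalIntegrable (by fun_prop) _ _)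
      (Continuous.intervalIntegrable (by fun_prop) _ _),
      intervalIntegral.integral_const_mul, intervalIntegral.integral_const_mul, ih, QK_sin,
      int_sin_sq _ (by omega), Finset.sum_Icc_succ_top (by omega)]
    have := Real.pi_pos
    have : ((K + 1 : ℕ) : ℝ) ≠ 0 := by positivity
    field_simp
    ring

lemma basel_tail (K : ℕ) (hK : 1 ≤ K) :
    π ^ 2 / 6 ≤ ∑ k ∈ Finset.Icc 1 K, 1 / (k : ℝ) ^ 2 + 1 / K := by
  set a : ℕ → ℝ := fun n => ∑ k ∈ Finset.Icc 1 (n + 1), 1 / (k : ℝ) ^ 2 + 1 / ((n + 1 : ℕ) : ℝ) with ha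
  have hanti : Antitone a := by
    apply antitone_nat_of_succ_le
    intro n
    simp only [ha]
    rw [Finset.sum_Icc_succ_top (by omega) (b := n + 1)]
    have h : 1 / (((n + 1 + 1 : ℕ) : ℝ)) ^ 2 + 1 / ((n + 1 + 1 : ℕ) : ℝ) ≤ 1 / ((n + 1 : ℕ) : ℝ) := by
      push_cast
      have h1 : (0 : ℝ) < n + 1 := by positivity
      have h2 : (0 : ℝ) < n + 1 + 1 := by positivity
      rw [div_add_div _ _ (by positivity) (by positivity), div_le_div_iff₀ (by positivity) (by positivity)]
      nlinarith [mul_pos h1 h2]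
    linarith
  have hs := hasSum_zeta_two.tendsto_sum_nat
  have hs2 : Tendsto (fun n : ℕ => ∑ k ∈ Finset.Icc 1 (n + 1), 1 / (k : ℝ) ^ 2) atTop
      (nhds (π ^ 2 / 6)) := by
    have h3 := (tendsto_add_atTop_iff_nat 2).2 hs
    refine h3.congr fun n => ?_
    rw [Finset.range_eq_Ico, Finset.sum_eq_sum_Ico_succ_bot (by omega)]
    simp
    rfl
  have hlim : Tendsto a atTop (nhds (π ^ 2 / 6 + 0)) := by
    apply hs2.add
    exact (tendsto_add_atTop_iff_nat 1).2 tendsto_one_div_atTop_nhds_zero_nat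
  rw [add_zero] at hlim
  have := hanti.le_of_tendsto hlim (K - 1)
  simp only [ha] at this
  rwa [Nat.sub_add_cancel hK] at this

lemma RK_sq_one (K : ℕ) (hK : 1 ≤ K) : ∫ t in (0 : ℝ)..1, RK K t ^ 2 ≤ 1 / K := by
  have h1 : ∫ t in (0 : ℝ)..1, RK K t ^ 2 = ∫ t in (0 : ℝ)..1, QK K t ^ 2 := by
    rw [intervalIntegral.integral_of_le zero_le_one, intervalIntegral.integral_of_le zero_le_one,
      integral_Ioc_eq_integral_Ioo, integral_Ioc_eq_integral_Ioo]
    apply setIntegral_congr_fun measurableSet_Ioo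
    intro t ht
    simp only
    unfold RK QK sawtooth
    have : ⌊t⌋ = 0 := Int.floor_eq_zero_iff.2 ⟨ht.1.le, ht.2⟩
    rw [this]; simp
  rw [h1, QK_sq]
  have h2 := basel_tail K hK
  have hp := Real.pi_gt_three
  have h3 : ∑ k ∈ Finset.Icc 1 K, 1 / (2 * π ^ 2 * (k : ℝ) ^ 2) =
      (1 / (2 * π ^ 2)) * ∑ k ∈ Finset.Icc 1 K, 1 / (k : ℝ) ^ 2 := by
    rw [Finset.mul_sum]; apply Finset.sum_congr rfl; intro k _; rw [one_div_mul_one_div]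
  rw [h3]
  have hK' : (0 : ℝ) < K := by exact_mod_cast hK
  have h4 : (1 / (2 * π ^ 2)) * (π ^ 2 / 6) = 1 / 12 := by field_simp; norm_num
  have h5 := mul_le_mul_of_nonneg_left h2 (by positivity : 0 ≤ 1 / (2 * π ^ 2))
  have h6 : (1 / (2 * π ^ 2)) * (1 / (K : ℝ)) ≤ 1 * (1 / K) := by
    gcongr
    rw [div_le_one (by positivity)]; nlinarith
  rw [h4, mul_add] at h5
  linarith

lemma RK_sq_int (K M : ℕ) (hK : 1 ≤ K) : ∫ t in (0 : ℝ)..M, RK K t ^ 2 ≤ M * (1 / K) := by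
  induction M with
  | zero => simp
  | succ M ih =>
    rw [← intervalIntegral.integral_add_adjacent_intervals (RK_sq_ii K 0 M)
      (RK_sq_ii K M ((M + 1 : ℕ) : ℝ))]
    have hper : ∀ n : ℕ, ∀ t, RK K (t + n) = RK K t := by
      intro n t
      induction n with
      | zero => simp
      | succ n ih => push_cast; rw [← add_assoc, RK_periodic, ih]
    have h1 : ∫ t in (M : ℝ)..((M + 1 : ℕ) : ℝ), RK K t ^ 2 = ∫ t in (0 : ℝ)..1, RK K t ^ 2 := by
      have := intervalIntegral.integral_comp_add_right (a := 0) (b := 1) (fun t => RK K t ^ 2) (M : ℝ)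
      simp only [hper] at this
      rw [this]; push_cast; congr 1 <;> ring
    rw [h1]
    have := RK_sq_one K hK
    push_cast
    linarith

/-- Remainder summand. -/
def rmK (K m : ℕ) (N : ℝ) : ℝ := if (m : ℝ) ≤ N then RK K (√(N ^ 2 - (m : ℝ) ^ 2)) else 0

lemma rmK_meas (K m : ℕ) : Measurable (rmK K m) := by
  unfold rmK
  refine Measurable.ite (measurableSet_le measurable_const measurable_id) ?_ measurable_const
  exact (RK_meas K).comp (by fun_prop)

lemma rmK_bdd (K m : ℕ) (N : ℝ) : |rmK K m N| ≤ 1 + K := by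
  unfold rmK
  split_ifs
  · exact RK_bdd _ _
  · simp; positivity

lemma rmK_sq_ii (K m : ℕ) (a b : ℝ) : IntervalIntegrable (fun t => rmK K m t ^ 2) volume a b := by
  apply ii_of_bdd ((rmK_meas K m).pow_const 2) (C := (1 + (K : ℝ)) ^ 2)
  intro x
  rw [abs_pow]
  have := rmK_bdd K m x
  gcongr

lemma rmK_sq_int (K m M : ℕ) (hK : 1 ≤ K) (hm : m ∈ Finset.Icc 1 M) :
    ∫ N in (0 : ℝ)..M, rmK K m N ^ 2 ≤ M * (1 / K) := by
  rw [Finset.mem_Icc] at hm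
  have hm1 : (1 : ℝ) ≤ m := by exact_mod_cast hm.1
  have hmM : (m : ℝ) ≤ M := by exact_mod_cast hm.2
  rw [← intervalIntegral.integral_add_adjacent_intervals (rmK_sq_ii K m 0 m) (rmK_sq_ii K m m M)]
  have h1 : ∫ N in (0 : ℝ)..m, rmK K m N ^ 2 = 0 := by
    rw [intervalIntegral.integral_of_le (by positivity), integral_Ioc_eq_integral_Ioo]
    apply setIntegral_eq_zero_of_forall_eq_zero
    intro x hx
    unfold rmK
    rw [if_neg (by linarith [hx.2])]; simp
  have h2 : ∫ N in (m : ℝ)..M, rmK K m N ^ 2 =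
      ∫ N in Set.Ioo (m : ℝ) M, RK K (√(N ^ 2 - (m : ℝ) ^ 2)) ^ 2 := by
    rw [intervalIntegral.integral_of_le hmM, integral_Ioc_eq_integral_Ioo]
    apply setIntegral_congr_fun measurableSet_Ioo
    intro x hx
    unfold rmK
    beta_reduce
    rw [if_pos hx.1.le]
  have hint : IntegrableOn (fun t => RK K t ^ 2) (Set.Icc 0 (M : ℝ)) := by
    have := RK_sq_ii K 0 M
    rwa [intervalIntegrable_iff_integrableOn_Icc_of_le (by positivity)] at this
  have h3 := (cv_bound (f := fun t => RK K t ^ 2) (g := fun N => √(N ^ 2 - (m : ℝ) ^ 2))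
    (g' := fun N => N / √(N ^ 2 - (m : ℝ) ^ 2)) (a := m) (b := M) (A := 0) (B := M) (c := 1)
    one_pos (fun x => sq_nonneg _) ((RK_meas K).pow_const 2) hint ?_ ?_ ?_).2
  · rw [h1, h2, zero_add]
    rw [one_mul] at h3
    refine h3.trans ?_
    rw [integral_Icc_eq_integral_Ioc, ← intervalIntegral.integral_of_le (by positivity)]
    exact RK_sq_int K M hK
  · intro x hx
    have hp : 0 < x ^ 2 - (m : ℝ) ^ 2 := by nlinarith [hx.1]
    have := ((hasDerivAt_pow 2 x).sub_const ((m : ℝ) ^ 2)).sqrt hp.ne'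
    refine this.congr_deriv ?_
    have := Real.sqrt_pos.2 hp
    simp only [Nat.cast_ofNat, Nat.add_one_sub_one, pow_one]
    field_simp
  · intro x hx
    have hp : 0 < x ^ 2 - (m : ℝ) ^ 2 := by nlinarith [hx.1]
    have := Real.sqrt_pos.2 hp
    have hx0 : 0 < x := by linarith [hx.1]
    rw [le_div_iff₀ this, one_mul, Real.sqrt_le_left hx0.le]
    nlinarith
  · intro x hx
    have hx0 : 0 < x := by linarith [hx.1]
    refine ⟨Real.sqrt_nonneg _, ?_⟩
    rw [Real.sqrt_le_left (by positivity)]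
    nlinarith [hx.2]

/-- The sawtooth sum with a fixed summation range. -/
def SM (M : ℕ) (N : ℝ) : ℝ := ∑ m ∈ Finset.Icc 1 M, (r2 m : ℝ) *
  (if (m : ℝ) ≤ N then sawtooth (√(N ^ 2 - (m : ℝ) ^ 2)) else 0)

lemma SM_eq (M : ℕ) {N : ℝ} (h0 : 0 ≤ N) (hN : N ≤ M) : SM M N =
    ∑ m ∈ Finset.Icc 1 ⌊N⌋₊, (r2 m : ℝ) * sawtooth (√(N ^ 2 - (m : ℝ) ^ 2)) := by
  unfold SM
  symm
  have hsub : Finset.Icc 1 ⌊N⌋₊ ⊆ Finset.Icc 1 M := by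
    apply Finset.Icc_subset_Icc_right
    exact Nat.floor_le_of_le hN
  rw [← Finset.sum_subset hsub]
  · apply Finset.sum_congr rfl
    intro m hm
    rw [if_pos]
    exact (Nat.le_floor_iff h0).1 (Finset.mem_Icc.1 hm).2
  · intro m hm hm'
    rw [if_neg, mul_zero]
    intro h
    apply hm'
    rw [Finset.mem_Icc] at hm ⊢
    exact ⟨hm.1, (Nat.le_floor_iff h0).2 h⟩

lemma SM_meas (M : ℕ) : Measurable (SM M) := by
  unfold SM
  refine Finset.measurable_sum _ fun m _ => Measurable.const_mul ?_ _
  refine Measurable.ite (measurableSet_le measurable_const measurable_id) ?_ measurable_const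
  exact sawtooth_meas.comp (by fun_prop)

lemma SM_bdd (M : ℕ) (N : ℝ) : |SM M N| ≤ ∑ m ∈ Finset.Icc 1 M, (r2 m : ℝ) := by
  unfold SM
  refine (Finset.abs_sum_le_sum_abs _ _).trans (Finset.sum_le_sum fun m _ => ?_)
  rw [abs_mul, Nat.abs_cast]
  have : |(if (m : ℝ) ≤ N then sawtooth (√(N ^ 2 - (m : ℝ) ^ 2)) else 0)| ≤ 1 := by
    split_ifs
    · exact sawtooth_bdd _
    · simp
  nlinarith [(Nat.cast_nonneg (r2 m) : (0 : ℝ) ≤ _)]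

lemma SM_sq_ii (M : ℕ) (a b : ℝ) : IntervalIntegrable (fun N => SM M N ^ 2) volume a b := by
  apply ii_of_bdd ((SM_meas M).pow_const 2) (C := (∑ m ∈ Finset.Icc 1 M, (r2 m : ℝ)) ^ 2)
  intro x
  rw [abs_pow]
  have := SM_bdd M x
  gcongr

lemma SM_decomp (M K : ℕ) (N : ℝ) : SM M N = ∑ m ∈ Finset.Icc 1 M, (r2 m : ℝ) * rmK K m N -
    ∑ k ∈ Finset.Icc 1 K, FK M k N / (π * k) := by
  unfold SM FK
  simp only [Finset.sum_div]
  rw [Finset.sum_comm, ← Finset.sum_sub_distrib]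
  apply Finset.sum_congr rfl
  intro m _
  unfold rmK snK RK
  by_cases h : (m : ℝ) ≤ N
  · simp only [if_pos h]
    rw [mul_add, Finset.mul_sum]
    simp only [mul_div_assoc]
    ring
  · simp [if_neg h]

lemma SM_sq_le (M K : ℕ) (N : ℝ) : SM M N ^ 2 ≤
    2 * ((∑ m ∈ Finset.Icc 1 M, (r2 m : ℝ)) * ∑ m ∈ Finset.Icc 1 M, (r2 m : ℝ) * rmK K m N ^ 2) +
    2 * ((∑ k ∈ Finset.Icc 1 K, 1 / (k : ℝ)) * ∑ k ∈ Finset.Icc 1 K, 1 / (k : ℝ) * FK M k N ^ 2) := by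
  have h1 : (∑ m ∈ Finset.Icc 1 M, (r2 m : ℝ) * rmK K m N) ^ 2 ≤
      (∑ m ∈ Finset.Icc 1 M, (r2 m : ℝ)) * ∑ m ∈ Finset.Icc 1 M, (r2 m : ℝ) * rmK K m N ^ 2 := by
    apply Finset.sum_sq_le_sum_mul_sum_of_sq_le_mul
    · intros; positivity
    · intros; positivity
    · intros; apply le_of_eq; ring
  have h2 : (∑ k ∈ Finset.Icc 1 K, FK M k N / (π * k)) ^ 2 ≤
      (∑ k ∈ Finset.Icc 1 K, 1 / (k : ℝ)) * ∑ k ∈ Finset.Icc 1 K, 1 / (k : ℝ) * FK M k N ^ 2 := by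
    have h3 : (∑ k ∈ Finset.Icc 1 K, FK M k N / (π * k)) = 
        (1 / π) * ∑ k ∈ Finset.Icc 1 K, FK M k N / k := by
      rw [Finset.mul_sum]
      apply Finset.sum_congr rfl
      intro k _
      rw [div_mul_div_comm, one_mul]
    have h4 : (∑ k ∈ Finset.Icc 1 K, FK M k N / k) ^ 2 ≤
      (∑ k ∈ Finset.Icc 1 K, 1 / (k : ℝ)) * ∑ k ∈ Finset.Icc 1 K, 1 / (k : ℝ) * FK M k N ^ 2 := by
      apply Finset.sum_sq_le_sum_mul_sum_of_sq_le_mul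
      · intros; positivity
      · intros; positivity
      · intros; apply le_of_eq; ring
    rw [h3, mul_pow]
    have hp := Real.pi_gt_three
    have h5 : (1 / π) ^ 2 ≤ 1 := by
      have : 1 / π ≤ 1 := by rw [div_le_one (by linarith)]; linarith
      have h0 : 0 ≤ 1 / π := by positivity
      nlinarith
    refine le_trans ?_ h4
    exact mul_le_of_le_one_left (sq_nonneg _) h5
  rw [SM_decomp M K N]
  nlinarith [sq_nonneg ((∑ m ∈ Finset.Icc 1 M, (r2 m : ℝ) * rmK K m N) +
    ∑ k ∈ Finset.Icc 1 K, FK M k N / (π * k))]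

lemma SM_sq_int (M : ℕ) (hM : 1 ≤ M) :
    ∫ N in (0 : ℝ)..M, SM M N ^ 2 ≤ 509000 * (M : ℝ) ^ 2 * (1 + Real.log M) ^ 4 := by
  have hM' : (1 : ℝ) ≤ M := by exact_mod_cast hM
  have hl : 0 ≤ Real.log M := Real.log_nonneg hM'
  set L := 1 + Real.log M with hL
  have hL1 : 1 ≤ L := by linarith
  set R := ∑ m ∈ Finset.Icc 1 M, (r2 m : ℝ) with hR
  set H := ∑ k ∈ Finset.Icc 1 M, 1 / (k : ℝ) with hH
  have hR0 : 0 ≤ R := by simp only [hR]; positivity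
  have hH0 : 0 ≤ H := by simp only [hH]; positivity
  have hRle : R ≤ 500 * M * L := by
    refine le_trans ?_ (sum_r2_sq M hM)
    apply Finset.sum_le_sum
    intro m _
    have : r2 m ≤ r2 m ^ 2 := Nat.le_self_pow (by norm_num) _
    exact_mod_cast this
  have hHle : H ≤ L := sum_inv_le M
  have hii1 : IntervalIntegrable (fun N => ∑ m ∈ Finset.Icc 1 M, (r2 m : ℝ) * rmK M m N ^ 2)
      volume 0 M := ii_sum fun m _ => (rmK_sq_ii M m _ _).const_mul _
  have hii2 : IntervalIntegrable (fun N => ∑ k ∈ Finset.Icc 1 M, 1 / (k : ℝ) * FK M k N ^ 2)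
      volume 0 M := ii_sum fun k _ => (FK_sq_ii M k _ _).const_mul _
  have h1 := intervalIntegral.integral_mono (by positivity : (0 : ℝ) ≤ M) (SM_sq_ii M 0 M)
    (((hii1.const_mul R).const_mul 2).add ((hii2.const_mul H).const_mul 2)) (SM_sq_le M M)
  refine h1.trans ?_
  rw [intervalIntegral.integral_add ((hii1.const_mul R).const_mul 2) ((hii2.const_mul H).const_mul 2)]
  simp only [intervalIntegral.integral_const_mul]
  rw [intervalIntegral.integral_finsetSum (fun m _ => (rmK_sq_ii M m _ _).const_mul _),
    intervalIntegral.integral_finsetSum (fun k _ => (FK_sq_ii M k _ _).const_mul _)]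
  simp only [intervalIntegral.integral_const_mul]
  have e1 : ∑ m ∈ Finset.Icc 1 M, (r2 m : ℝ) * ∫ N in (0 : ℝ)..M, rmK M m N ^ 2 ≤ R := by
    apply Finset.sum_le_sum
    intro m hm
    have := rmK_sq_int M m M hM hm
    rw [mul_one_div_cancel (by positivity)] at this
    exact mul_le_of_le_one_right (by positivity) this
  have e2 : ∑ k ∈ Finset.Icc 1 M, 1 / (k : ℝ) * ∫ N in (0 : ℝ)..M, FK M k N ^ 2 ≤
      500 * (M : ℝ) ^ 2 * L * H + 2000 * (M : ℝ) ^ 2 * L ^ 3 * ∑ k ∈ Finset.Icc 1 M, 1 / (k : ℝ) ^ 2 := by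
    rw [hH, Finset.mul_sum, Finset.mul_sum, ← Finset.sum_add_distrib]
    apply Finset.sum_le_sum
    intro k hk
    have := FK_sq_int M k hM (Finset.mem_Icc.1 hk).1
    refine (mul_le_mul_of_nonneg_left this (by positivity)).trans (le_of_eq ?_)
    rw [← hL]
    ring
  have e3 : ∑ k ∈ Finset.Icc 1 M, 1 / (k : ℝ) ^ 2 ≤ 2 := by
    refine (sum_le_hasSum _ (fun k _ => by positivity) hasSum_zeta_two).trans ?_
    have := Real.pi_lt_d2
    have := Real.pi_pos
    nlinarith
  have e4 : 2 * (R * ∑ m ∈ Finset.Icc 1 M, (r2 m : ℝ) * ∫ N in (0 : ℝ)..M, rmK M m N ^ 2) ≤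
      2 * ((500 * M * L) * (500 * M * L)) := by
    exact mul_le_mul_of_nonneg_left ((mul_le_mul_of_nonneg_left (e1.trans hRle) hR0).trans
      (mul_le_mul_of_nonneg_right hRle (by positivity))) (by norm_num)
  have e5 : 2 * (H * ∑ k ∈ Finset.Icc 1 M, 1 / (k : ℝ) * ∫ N in (0 : ℝ)..M, FK M k N ^ 2) ≤
      2 * (L * (500 * (M : ℝ) ^ 2 * L * L + 2000 * (M : ℝ) ^ 2 * L ^ 3 * 2)) := by
    have : 500 * (M : ℝ) ^ 2 * L * H + 2000 * (M : ℝ) ^ 2 * L ^ 3 * ∑ k ∈ Finset.Icc 1 M, 1 / (k : ℝ) ^ 2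
      ≤ 500 * (M : ℝ) ^ 2 * L * L + 2000 * (M : ℝ) ^ 2 * L ^ 3 * 2 := by gcongr
    have h0 : 0 ≤ 500 * (M : ℝ) ^ 2 * L * L + 2000 * (M : ℝ) ^ 2 * L ^ 3 * 2 := by positivity
    have := e2.trans this
    refine mul_le_mul_of_nonneg_left ?_ (by norm_num)
    exact (mul_le_mul_of_nonneg_left this hH0).trans (mul_le_mul_of_nonneg_right hHle h0)
  refine (add_le_add e4 e5).trans ?_
  have p2 : L ^ 2 ≤ L ^ 4 := pow_le_pow_right₀ hL1 (by norm_num)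
  have p3 : L ^ 3 ≤ L ^ 4 := pow_le_pow_right₀ hL1 (by norm_num)
  have q2 := mul_le_mul_of_nonneg_left p2 (by positivity : 0 ≤ 500000 * (M : ℝ) ^ 2)
  have q3 := mul_le_mul_of_nonneg_left p3 (by positivity : 0 ≤ 1000 * (M : ℝ) ^ 2)
  nlinarith

lemma log_bound {X : ℝ} (hX : 10 ≤ X) {M : ℝ} (hM1 : 1 ≤ M) (hM : M ≤ 10 * X ^ 2) :
    1 + Real.log M ≤ 4 * Real.log X := by
  have h1 : 1 ≤ Real.log X := by
    rw [Real.le_log_iff_exp_le (by linarith)]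
    linarith [Real.exp_one_lt_d9]
  have h2 : Real.log M ≤ Real.log (X ^ 3) := by
    apply Real.log_le_log (by linarith)
    nlinarith [sq_nonneg X]
  rw [Real.log_pow] at h2
  push_cast at h2
  linarith

/-- The sawtooth sum `Ξ_ψ(x;ω)` exhibits near square-root cancellation
in mean square. -/
theorem xi_psi_mean_square (ω : ℝ → ℝ) (hω : OmegaClass ω) :
    ∃ C > (0 : ℝ), ∃ X₀ > (0 : ℝ), ∀ X ≥ X₀,
      (1 / X) * ∫ x in X..(2 * X), XiPsi ω x ^ 2 ≤ C * X ^ 2 * Real.log X ^ 4 := by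
  have hdiff : ∀ x, 0 < x → HasDerivAt ω (deriv ω x) x := by
    intro x hx
    have h1 : DifferentiableOn ℝ ω (Set.Ioi 0) := hω.contDiff.differentiableOn (by norm_num)
    exact (h1.differentiableAt (Ioi_mem_nhds hx)).hasDerivAt
  have hev : ∀ᶠ x in atTop, |deriv ω x| < 1 / 2 ∧ ω x < 1 :=
    hω.deriv_small.and (hω.tendsto_zero.eventually_lt_const one_pos)
  obtain ⟨x₀, hx₀⟩ := eventually_atTop.1 hev
  refine ⟨4 * 509000 * 100 * 256, by norm_num, max 10 x₀, by positivity, ?_⟩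
  intro X hX
  have hX10 : 10 ≤ X := (le_max_left _ _).trans hX
  have hXx₀ : x₀ ≤ X := (le_max_right _ _).trans hX
  have hX0 : 0 < X := by linarith
  set M : ℕ := ⌈9 * X ^ 2⌉₊ with hMdef
  have hM9 : 9 * X ^ 2 ≤ M := Nat.le_ceil _
  have hM10 : (M : ℝ) ≤ 10 * X ^ 2 := by
    have := Nat.ceil_lt_add_one (by positivity : 0 ≤ 9 * X ^ 2)
    nlinarith
  have hM1' : (1 : ℝ) ≤ M := by nlinarith
  have hM1 : 1 ≤ M := by exact_mod_cast hM1'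
  have hint : IntegrableOn (fun t => SM M t ^ 2) (Set.Icc 0 (M : ℝ)) := by
    have := SM_sq_ii M 0 M
    rwa [intervalIntegrable_iff_integrableOn_Icc_of_le (by positivity)] at this
  have hI : ∫ N in Set.Icc (0 : ℝ) M, SM M N ^ 2 ≤ 509000 * (10 * X ^ 2) ^ 2 * (4 * Real.log X) ^ 4 := by
    rw [integral_Icc_eq_integral_Ioc, ← intervalIntegral.integral_of_le (by positivity)]
    refine (SM_sq_int M hM1).trans ?_
    have h1 := log_bound hX10 hM1' hM10
    have h2 : 0 ≤ 1 + Real.log M := by linarith [Real.log_nonneg hM1']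
    gcongr
  have hwb : ∀ x ∈ Set.Ioo X (2 * X), 0 < ω x ∧ ω x < 1 ∧ |deriv ω x| < 1 / 2 := by
    intro x hx
    have h := hx₀ x (by linarith [hx.1])
    exact ⟨hω.pos x (by linarith [hx.1]), h.2, h.1⟩
  have c1 := cv_bound (f := fun t => SM M t ^ 2) (g := fun x => x ^ 2) (g' := fun x => 2 * x)
    (a := X) (b := 2 * X) (A := 0) (B := M) (c := X) hX0 (fun x => sq_nonneg _)
    ((SM_meas M).pow_const 2) hint
    (fun x _ => by simpa using hasDerivAt_pow 2 x) (fun x hx => by linarith [hx.1])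
    (fun x hx => ⟨by positivity, by nlinarith [hx.1, hx.2]⟩)
  have c2 := cv_bound (f := fun t => SM M t ^ 2) (g := fun x => (x + ω x) ^ 2)
    (g' := fun x => 2 * (x + ω x) * (1 + deriv ω x))
    (a := X) (b := 2 * X) (A := 0) (B := M) (c := X) hX0 (fun x => sq_nonneg _)
    ((SM_meas M).pow_const 2) hint
    (fun x hx => by
      have h := ((hasDerivAt_id x).add (hdiff x (by linarith [hx.1]))).pow 2
      refine (show HasDerivAt (fun x => (x + ω x) ^ 2) _ x from h).congr_deriv ?_
      simp)
    (fun x hx => by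
      obtain ⟨h1, h2, h3⟩ := hwb x hx
      rw [abs_lt] at h3
      have h4 : X ≤ x + ω x := by linarith [hx.1]
      have h5 : 1 / 2 ≤ 1 + deriv ω x := by linarith
      nlinarith)
    (fun x hx => by
      obtain ⟨h1, h2, h3⟩ := hwb x hx
      refine ⟨by positivity, ?_⟩
      have h4 : x + ω x ≤ 3 * X := by linarith [hx.2]
      have h5 : 0 ≤ x + ω x := by linarith [hx.1]
      nlinarith)
  have hpt : ∀ x ∈ Set.Ioo X (2 * X), XiPsi ω x ^ 2 ≤
      2 * SM M ((x + ω x) ^ 2) ^ 2 + 2 * SM M (x ^ 2) ^ 2 := by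
    intro x hx
    obtain ⟨h1, h2, h3⟩ := hwb x hx
    have h4 : x + ω x ≤ 3 * X := by linarith [hx.2]
    have h5 : 0 ≤ x + ω x := by linarith [hx.1]
    have e : XiPsi ω x = SM M ((x + ω x) ^ 2) - SM M (x ^ 2) := by
      rw [SM_eq M (by positivity) (by nlinarith), SM_eq M (by positivity) (by nlinarith [hx.1, hx.2])]
      unfold XiPsi
      simp only [← pow_mul]
    rw [e]
    nlinarith [sq_nonneg (SM M ((x + ω x) ^ 2) + SM M (x ^ 2))]
  have hXi : ∫ x in X..(2 * X), XiPsi ω x ^ 2 ≤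
      2 * (∫ x in Set.Ioo X (2 * X), SM M ((x + ω x) ^ 2) ^ 2) +
      2 * (∫ x in Set.Ioo X (2 * X), SM M (x ^ 2) ^ 2) := by
    rw [intervalIntegral.integral_of_le (by linarith), integral_Ioc_eq_integral_Ioo,
      ← integral_const_mul, ← integral_const_mul,
      ← integral_add (c2.1.const_mul 2) (c1.1.const_mul 2)]
    apply integral_mono_of_nonneg (Eventually.of_forall fun x => sq_nonneg _)
      ((c2.1.const_mul 2).add (c1.1.const_mul 2))
    filter_upwards [ae_restrict_mem measurableSet_Ioo] with x hx
    exact hpt x hx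
  have d1 := c1.2.trans hI
  have d2 := c2.2.trans hI
  rw [one_div, inv_mul_le_iff₀ hX0]
  refine le_of_mul_le_mul_left ?_ hX0
  calc X * ∫ x in X..(2 * X), XiPsi ω x ^ 2 ≤ X * (2 * (∫ x in Set.Ioo X (2 * X), SM M ((x + ω x) ^ 2) ^ 2) +
      2 * (∫ x in Set.Ioo X (2 * X), SM M (x ^ 2) ^ 2)) := mul_le_mul_of_nonneg_left hXi hX0.le
    _ ≤ 4 * (509000 * (10 * X ^ 2) ^ 2 * (4 * Real.log X) ^ 4) := by linarith
    _ = _ := by ring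
end
end

section
/- Let ω ∈ Ω. There exists a unique Borel probability measure μ_ω on ℝ such that ∫_ℝ α^j dμ_ω(α) = (j!/(2^{j/2}·(j/2)!))·L_j(ω) for every even integer j ≥ 0 and ∫_ℝ α^j dμ_ω(α) = 0 for every odd integer j ≥ 1. -/
open MeasureTheory Filter Real

noncomputable section

lemma bang_step (f : ℕ → ℝ → ℂ) (M : ℕ → ℝ) (hM : ∀ n, 0 < M n)
    (hmono : Monotone fun n => M (n + 1) / M n)
    (hf : ∀ n t, HasDerivAt (f n) (f (n + 1) t) t) (hb : ∀ n t, ‖f n t‖ ≤ M n)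
    (N : ℕ) (x h : ℝ) (hx : ∀ j : ℕ, ‖f j x‖ ≤ exp ((j : ℝ) - ((N : ℝ) + 1)) * M j)
    (h0 : 0 ≤ h) (hh : h ≤ M N / M (N + 1) / exp 1) :
    ∀ j : ℕ, ‖f j (x + h)‖ ≤ exp ((j : ℝ) - N) * M j := by
  set r := M (N + 1) / M N with hr
  have hrpos : 0 < r := div_pos (hM _) (hM _)
  have key : ∀ k : ℕ, k ≤ N + 1 → ∀ t ∈ Set.Icc x (x + h),
      ‖f (N + 1 - k) t‖ ≤ exp (((N + 1 - k : ℕ) : ℝ) - ((N : ℝ) + 1)) * M (N + 1 - k)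
        * exp (exp 1 * r * (t - x)) := by
    intro k
    induction k with
    | zero =>
      intro _ t ht
      have h1 : 1 ≤ exp (exp 1 * r * (t - x)) := by
        apply Real.one_le_exp
        have : 0 ≤ t - x := by linarith [ht.1]
        positivity
      simp only [Nat.sub_zero]
      push_cast
      simp only [sub_self, Real.exp_zero, one_mul]
      calc ‖f (N + 1) t‖ ≤ M (N + 1) := hb _ _
        _ ≤ _ := le_mul_of_one_le_right (hM _).le h1
    | succ k ih =>
      intro hk
      have ih := ih (by omega)
      obtain ⟨j, hj⟩ : ∃ j, N + 1 - (k + 1) = j := ⟨_, rfl⟩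
      have hj1 : N + 1 - k = j + 1 := by omega
      rw [hj]
      rw [hj1] at ih
      have hjN : j ≤ N := by omega
      refine image_norm_le_of_norm_deriv_right_le_deriv_boundary (f' := fun t => f (j + 1) t)
        (B := fun t => exp ((j : ℝ) - ((N : ℝ) + 1)) * M j * exp (exp 1 * r * (t - x)))
        (B' := fun t => exp ((j : ℝ) - ((N : ℝ) + 1)) * M j * (exp (exp 1 * r * (t - x)) * (exp 1 * r)))
        (fun t _ => (hf j t).continuousAt.continuousWithinAt)
        (fun t _ => (hf j t).hasDerivWithinAt) ?_ ?_ ?_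
      · simpa using hx j
      · intro t
        apply HasDerivAt.const_mul
        apply HasDerivAt.exp
        simpa using ((hasDerivAt_id t).sub_const x).const_mul (exp 1 * r)
      · intro t ht
        refine (ih t ⟨ht.1, ht.2.le⟩).trans ?_
        have h1 : M (j + 1) ≤ M j * r := by
          have : M (j + 1) / M j ≤ r := hmono hjN
          rw [div_le_iff₀ (hM j)] at this
          linarith
        have h2 : exp (((j + 1 : ℕ) : ℝ) - ((N : ℝ) + 1)) = exp ((j : ℝ) - ((N : ℝ) + 1)) * exp 1 := by
          rw [← Real.exp_add]; congr 1; push_cast; ring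
        rw [h2]
        calc _ ≤ exp ((j : ℝ) - ((N : ℝ) + 1)) * exp 1 * (M j * r) * exp (exp 1 * r * (t - x)) := by
              gcongr
          _ = _ := by ring
  intro j
  by_cases hj : j ≤ N + 1
  · have := key (N + 1 - j) (by omega) (x + h) ⟨by linarith, le_rfl⟩
    rw [show N + 1 - (N + 1 - j) = j by omega] at this
    refine this.trans ?_
    have h3 : exp 1 * r * (x + h - x) ≤ 1 := by
      rw [add_sub_cancel_left]
      calc exp 1 * r * h ≤ exp 1 * r * (M N / M (N + 1) / exp 1) := by gcongr
        _ = 1 := by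
          rw [hr]; have := (hM N).ne'; have := (hM (N + 1)).ne'; have := (Real.exp_pos 1).ne'
          field_simp
    calc _ ≤ exp ((j : ℝ) - ((N : ℝ) + 1)) * M j * exp 1 := by
          have := (hM j).le
          gcongr
      _ = exp ((j : ℝ) - ((N : ℝ) + 1)) * exp 1 * M j := by ring
      _ = _ := by
          rw [← Real.exp_add]; congr 2; ring
  · refine (hb j _).trans ?_
    apply le_mul_of_one_le_left (hM j).le
    apply Real.one_le_exp
    have : (N : ℝ) ≤ j := by exact_mod_cast (by omega)
    linarith

lemma bang_iter (f : ℕ → ℝ → ℂ) (M : ℕ → ℝ) (hM : ∀ n, 0 < M n)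
    (hmono : Monotone fun n => M (n + 1) / M n)
    (hf : ∀ n t, HasDerivAt (f n) (f (n + 1) t) t) (hb : ∀ n t, ‖f n t‖ ≤ M n)
    (K m : ℕ) : ∀ (x h : ℝ), (∀ j : ℕ, ‖f j x‖ ≤ exp ((j : ℝ) - ((K + m : ℕ) : ℝ)) * M j) →
    0 ≤ h → h ≤ ∑ i ∈ Finset.range m, M (K + i) / M (K + i + 1) / exp 1 →
    ∀ j : ℕ, ‖f j (x + h)‖ ≤ exp ((j : ℝ) - K) * M j := by
  induction m with
  | zero =>
    intro x h hx h0 hh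
    have : h = 0 := le_antisymm (by simpa using hh) h0
    simpa [this] using hx
  | succ m ih =>
    intro x h hx h0 hh
    rw [Finset.sum_range_succ] at hh
    set a := M (K + m) / M (K + m + 1) / exp 1 with ha
    have ha0 : 0 ≤ a := by have := hM (K + m); have := hM (K + m + 1); positivity
    have h1 := bang_step f M hM hmono hf hb (K + m) x (min h a)
      (by intro j; have := hx j; push_cast at this ⊢; rwa [← add_assoc] at this)
      (le_min h0 ha0) (min_le_right _ _)
    have h2 := ih (x + min h a) (h - min h a) h1 (by linarith [min_le_left h a]) (by
      rcases le_total h a with hc | hc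
      · rw [min_eq_left hc, sub_self]
        apply Finset.sum_nonneg; intro i _
        have := hM (K + i); have := hM (K + i + 1); positivity
      · rw [min_eq_right hc]; linarith)
    rwa [show x + min h a + (h - min h a) = x + h by ring] at h2

/-- The Denjoy-Carleman theorem, following Bang. -/
lemma bang (f : ℕ → ℝ → ℂ) (M : ℕ → ℝ) (hM : ∀ n, 0 < M n)
    (hlc : ∀ n, M (n + 1) ^ 2 ≤ M n * M (n + 2))
    (hf : ∀ n t, HasDerivAt (f n) (f (n + 1) t) t) (hb : ∀ n t, ‖f n t‖ ≤ M n)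
    (h0 : ∀ n, f n 0 = 0) (hdiv : ¬ Summable fun n => M n / M (n + 1)) (t : ℝ) (ht : 0 ≤ t) :
    f 0 t = 0 := by
  have hmono : Monotone fun n => M (n + 1) / M n := by
    apply monotone_nat_of_le_succ
    intro n
    rw [div_le_div_iff₀ (hM _) (hM _)]
    nlinarith [hlc n]
  have hP : ∀ K : ℕ, ‖f 0 t‖ ≤ exp (-(K : ℝ)) * M 0 := by
    intro K
    have hd : ¬ Summable fun i => M (K + i) / M (K + i + 1) / exp 1 := by
      intro hs
      apply hdiv
      have h1 := hs.mul_right (exp 1)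
      have h2 : (fun i => M (K + i) / M (K + i + 1) / exp 1 * exp 1)
          = fun i => (fun n => M n / M (n + 1)) (i + K) := by
        funext i
        rw [div_mul_cancel₀ _ (Real.exp_pos 1).ne', add_comm K i]
      rw [h2] at h1
      exact (summable_nat_add_iff K).1 h1
    rw [not_summable_iff_tendsto_nat_atTop_of_nonneg] at hd
    · obtain ⟨m, hm⟩ := (hd.eventually_ge_atTop t).exists
      have := bang_iter f M hM hmono hf hb K m 0 t (by
        intro j; rw [h0, norm_zero]; have := hM j; positivity) ht hm 0
      simpa using this
    · intro i
      have := hM (K + i); have := hM (K + i + 1); positivity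
  have hlim : Tendsto (fun K : ℕ => exp (-(K : ℝ)) * M 0) atTop (nhds (0 * M 0)) :=
    (Real.tendsto_exp_neg_atTop_nhds_zero.comp tendsto_natCast_atTop_atTop).mul_const _
  rw [zero_mul] at hlim
  have := ge_of_tendsto' hlim hP
  simpa using this

/-- A qualitative form of the Carleman inequality. -/
lemma carleman_summable (a : ℕ → ℝ) (ha : ∀ n, 0 < a n) (hs : Summable a) :
    Summable fun n : ℕ => (∏ i ∈ Finset.range (n + 1), a i) ^ ((1 : ℝ) / ((n : ℝ) + 1)) := by
  set S : ℕ → ℝ := fun n => ∑ i ∈ Finset.range n, ((i : ℝ) + 1) * a i with hS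
  have hSn : ∀ n, 0 ≤ S n := fun n => Finset.sum_nonneg fun i _ => by have := ha i; positivity
  have hgm : ∀ n : ℕ, (∏ i ∈ Finset.range (n + 1), a i) ^ ((1 : ℝ) / ((n : ℝ) + 1))
      ≤ exp 1 * (S (n + 1) / ((n : ℝ) + 1) ^ 2) := by
    intro n
    have hn : (0 : ℝ) < (n : ℝ) + 1 := by positivity
    have h1 := Real.geom_mean_le_arith_mean (Finset.range (n + 1)) (fun _ => (1 : ℝ))
      (fun i => ((i : ℝ) + 1) * a i) (fun _ _ => zero_le_one) (by simp; positivity)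
      (fun i _ => by have := ha i; positivity)
    simp only [Real.rpow_one, one_mul, Finset.sum_const, Finset.card_range, nsmul_eq_mul, mul_one]
      at h1
    push_cast at h1
    rw [Finset.prod_mul_distrib] at h1
    have hfac : ∏ i ∈ Finset.range (n + 1), ((i : ℝ) + 1) = ((n + 1).factorial : ℝ) := by
      rw [← Finset.prod_range_add_one_eq_factorial]; push_cast; rfl
    have hpa : 0 ≤ ∏ i ∈ Finset.range (n + 1), a i := Finset.prod_nonneg fun i _ => (ha i).le
    rw [hfac, Real.mul_rpow (by positivity) hpa] at h1
    have h2 : ((n : ℝ) + 1) / exp 1 ≤ ((n + 1).factorial : ℝ) ^ (((n : ℝ) + 1)⁻¹) := by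
      rw [Real.le_rpow_inv_iff_of_pos (by positivity) (by positivity) hn]
      have h3 := Real.pow_div_factorial_le_exp ((n : ℝ) + 1) hn.le (n + 1)
      rw [show ((n : ℝ) + 1) = ((n + 1 : ℕ) : ℝ) by push_cast; ring, Real.rpow_natCast, div_pow,
        ← Real.exp_nat_mul, mul_one]
      push_cast
      rw [div_le_iff₀ (by positivity)] at h3 ⊢
      linarith
    have hg0 : 0 ≤ (∏ i ∈ Finset.range (n + 1), a i) ^ (((n : ℝ) + 1)⁻¹) :=
      Real.rpow_nonneg hpa _
    rw [one_div]
    have h4 := (mul_le_mul_of_nonneg_right h2 hg0).trans h1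
    rw [div_mul_eq_mul_div, div_le_div_iff₀ (by positivity) (by positivity)] at h4
    rw [← mul_div_assoc, le_div_iff₀ (by positivity)]
    simp only [hS]
    nlinarith [h4]
  have hbd : ∀ K : ℕ, ∑ n ∈ Finset.range K, S (n + 1) / ((n : ℝ) + 1) ^ 2 + S K / K
      ≤ 2 * ∑ n ∈ Finset.range K, a n := by
    intro K
    induction K with
    | zero => simp
    | succ K ih =>
      rw [Finset.sum_range_succ, Finset.sum_range_succ]
      have hSK : S (K + 1) = S K + ((K : ℝ) + 1) * a K := by
        simp only [hS]; rw [Finset.sum_range_succ]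
      push_cast
      have : S (K + 1) / ((K : ℝ) + 1) ^ 2 + S (K + 1) / ((K : ℝ) + 1) ≤ S K / K + 2 * a K := by
        rw [hSK]
        have haK := ha K
        rcases Nat.eq_zero_or_pos K with hK | hK
        · subst hK; simp [hS]; linarith
        · have hK' : (0 : ℝ) < K := by exact_mod_cast hK
          have e1 : S K / ((K : ℝ) + 1) ^ 2 + S K / ((K : ℝ) + 1) ≤ S K / K := by
            rw [div_add_div _ _ (by positivity) (by positivity), div_le_div_iff₀ (by positivity) hK']
            have := mul_nonneg (hSn K) hK'.le
            nlinarith [hSn K, mul_nonneg (hSn K) (sq_nonneg (K : ℝ))]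
          have e2 : ((K : ℝ) + 1) * a K / ((K : ℝ) + 1) ^ 2 ≤ a K := by
            rw [div_le_iff₀ (by positivity)]
            nlinarith [mul_pos haK hK', mul_pos haK (mul_pos hK' hK')]
          have e3 : ((K : ℝ) + 1) * a K / ((K : ℝ) + 1) = a K := by field_simp
          rw [add_div, add_div]
          linarith
      linarith
  refine Summable.of_nonneg_of_le (fun n => Real.rpow_nonneg
    (Finset.prod_nonneg fun i _ => (ha i).le) _) hgm ?_
  apply Summable.mul_left
  refine summable_of_sum_range_le (c := 2 * ∑' n, a n)
    (fun n => div_nonneg (hSn _) (by positivity)) ?_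
  intro K
  have h5 := hbd K
  have h6 : ∑ n ∈ Finset.range K, a n ≤ ∑' n, a n := hs.sum_le_tsum _ fun i _ => (ha i).le
  have h7 : 0 ≤ S K / K := div_nonneg (hSn _) (by positivity)
  linarith

lemma carleman_unique (μ ν : Measure ℝ) [IsProbabilityMeasure μ] [IsProbabilityMeasure ν]
    (hμ : ∀ j : ℕ, Integrable (fun α : ℝ => α ^ j) μ)
    (hν : ∀ j : ℕ, Integrable (fun α : ℝ => α ^ j) ν)
    (heq : ∀ j : ℕ, ∫ α, α ^ j ∂μ = ∫ α, α ^ j ∂ν)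
    (h2 : ∫ α, α ^ 2 ∂μ ≠ 0)
    (hC : ¬ Summable fun k : ℕ => (∫ α, α ^ (2 * (k + 1)) ∂μ) ^ ((-1 : ℝ) / (2 * ((k : ℝ) + 1)))) :
    μ = ν := by
  have hμ' : ∀ j : ℕ, Integrable (fun α : ℝ => |α| ^ j) μ := fun j => by
    simpa [abs_pow] using (hμ j).abs
  have hν' : ∀ j : ℕ, Integrable (fun α : ℝ => |α| ^ j) ν := fun j => by
    simpa [abs_pow] using (hν j).abs
  have hLp : ∀ (ρ : Measure ℝ), (∀ j : ℕ, Integrable (fun α : ℝ => |α| ^ j) ρ) → IsFiniteMeasure ρ →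
      ∀ n : ℕ, MemLp (id : ℝ → ℝ) n ρ := by
    intro ρ hρ _ n
    rcases Nat.eq_zero_or_pos n with hn | hn
    · subst hn; simpa using (by fun_prop : AEStronglyMeasurable (id : ℝ → ℝ) ρ)
    · rw [← integrable_norm_rpow_iff (by fun_prop) (by exact_mod_cast hn.ne') (by simp)]
      simpa using hρ n
  set M : ℕ → ℝ := fun n => ∫ α, |α| ^ n ∂μ + ∫ α, |α| ^ n ∂ν with hMdef
  have hMμ0 : ∀ n, 0 < ∫ α, |α| ^ n ∂μ := by
    intro n
    refine lt_of_le_of_ne (integral_nonneg fun x => by positivity) ?_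
    intro h
    rw [eq_comm, integral_eq_zero_iff_of_nonneg (fun x => by positivity) (hμ' n)] at h
    apply h2
    rcases Nat.eq_zero_or_pos n with hn | hn
    · subst hn
      obtain ⟨x, hx⟩ := h.exists
      simp at hx
    · rw [integral_eq_zero_of_ae]
      filter_upwards [h] with x hx
      have : |x| = 0 := by simpa using eq_zero_of_pow_eq_zero hx
      simp at this
      simp [this]
  have hM : ∀ n, 0 < M n := fun n =>
    add_pos_of_pos_of_nonneg (hMμ0 n) (integral_nonneg fun x => by positivity)
  have hquad : ∀ (ρ : Measure ℝ), (∀ j : ℕ, Integrable (fun α : ℝ => |α| ^ j) ρ) → ∀ (n : ℕ) (s : ℝ),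
      0 ≤ s ^ 2 * ∫ α, |α| ^ n ∂ρ - 2 * s * ∫ α, |α| ^ (n + 1) ∂ρ + ∫ α, |α| ^ (n + 2) ∂ρ := by
    intro ρ hρ n s
    rw [← integral_const_mul, ← integral_const_mul, ← integral_sub, ← integral_add]
    · apply integral_nonneg
      intro x
      have : s ^ 2 * |x| ^ n - 2 * s * |x| ^ (n + 1) + |x| ^ (n + 2) = |x| ^ n * (s - |x|) ^ 2 := by
        ring
      simp only [Pi.zero_apply]
      rw [this]; positivity
    · exact ((hρ n).const_mul _).sub ((hρ _).const_mul _)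
    · exact hρ _
    · exact (hρ _).const_mul _
    · exact (hρ _).const_mul _
  have hlc : ∀ n, M (n + 1) ^ 2 ≤ M n * M (n + 2) := by
    intro n
    have h1 : 0 ≤ (M (n + 1) / M n) ^ 2 * M n - 2 * (M (n + 1) / M n) * M (n + 1) + M (n + 2) := by
      have a1 := hquad μ hμ' n (M (n + 1) / M n)
      have a2 := hquad ν hν' n (M (n + 1) / M n)
      simp only [hMdef] at a1 a2 ⊢
      linarith
    have h3 := hM n
    have h4 : (M (n + 1) / M n) ^ 2 * M n - 2 * (M (n + 1) / M n) * M (n + 1) + M (n + 2)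
        = (M n * M (n + 2) - M (n + 1) ^ 2) / M n := by
      field_simp; ring
    rw [h4] at h1
    have h5 := mul_nonneg h1 h3.le
    rw [div_mul_cancel₀ _ h3.ne'] at h5
    linarith
  have hEven : ∀ k : ℕ, M (2 * k) = 2 * ∫ α, α ^ (2 * k) ∂μ := by
    intro k
    simp only [hMdef]
    have : ∀ x : ℝ, |x| ^ (2 * k) = x ^ (2 * k) := fun x => (even_two_mul k).pow_abs x
    simp only [this]
    rw [← heq]; ring
  have hM0 : M 0 = 2 := by simp [hMdef]; norm_num
  have hdiv : ¬ Summable fun n => M n / M (n + 1) := by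
    intro hs
    apply hC
    have h1 := carleman_summable _ (fun n => div_pos (hM n) (hM (n + 1))) hs
    have h3 := h1.comp_injective (i := fun k : ℕ => 2 * k + 1) (fun a b h => by simpa using h)
    refine h3.congr ?_
    intro k
    simp only [Function.comp]
    have hprod : ∀ n, ∏ i ∈ Finset.range n, M i / M (i + 1) = M 0 / M n := by
      intro n
      induction n with
      | zero => simp [(hM 0).ne']
      | succ n ih =>
        rw [Finset.prod_range_succ, ih]
        have := (hM n).ne'
        have := (hM (n + 1)).ne'
        field_simp
    rw [hprod, hM0, show 2 * k + 1 + 1 = 2 * (k + 1) by ring, hEven]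
    have h4 : 0 < ∫ α, α ^ (2 * (k + 1)) ∂μ := by
      have := hM (2 * (k + 1)); rw [hEven] at this; linarith
    rw [show (2 : ℝ) / (2 * ∫ α, α ^ (2 * (k + 1)) ∂μ) = (∫ α, α ^ (2 * (k + 1)) ∂μ)⁻¹ by
      field_simp, Real.inv_rpow h4.le, ← Real.rpow_neg h4.le]
    congr 1
    push_cast; rw [neg_div]; congr 2; ring
  -- the derivatives of the difference of the characteristic functions
  have hcd : ∀ (ρ : Measure ℝ), (∀ j : ℕ, Integrable (fun α : ℝ => |α| ^ j) ρ) → IsFiniteMeasure ρ →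
      ∀ n t, HasDerivAt (iteratedDeriv n (charFun ρ)) (iteratedDeriv (n + 1) (charFun ρ) t) t := by
    intro ρ hρ _ n t
    have h1 : ContDiff ℝ (n + 1 : ℕ) (charFun ρ) := by
      apply contDiff_charFun
      exact_mod_cast hLp ρ hρ inferInstance (n + 1)
    rw [iteratedDeriv_succ]
    exact ((h1.differentiable_iteratedDeriv n (by exact_mod_cast Nat.lt_succ_self n)) t).hasDerivAt
  have hbd : ∀ (ρ : Measure ℝ), (∀ j : ℕ, Integrable (fun α : ℝ => |α| ^ j) ρ) → IsFiniteMeasure ρ →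
      ∀ n t, ‖iteratedDeriv n (charFun ρ) t‖ ≤ ∫ α, |α| ^ n ∂ρ := by
    intro ρ hρ _ n t
    rw [iteratedDeriv_charFun (hLp ρ hρ inferInstance n), norm_mul, norm_pow, Complex.norm_I,
      one_pow, one_mul]
    refine (norm_integral_le_integral_norm _).trans (le_of_eq ?_)
    congr 1
    funext x
    rw [norm_mul, ← Complex.ofReal_mul, Complex.norm_exp_ofReal_mul_I]
    simp
  set f : ℕ → ℝ → ℂ := fun n t => iteratedDeriv n (charFun μ) t - iteratedDeriv n (charFun ν) t
    with hfdef
  have hf : ∀ n t, HasDerivAt (f n) (f (n + 1) t) t := fun n t =>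
    (hcd μ hμ' inferInstance n t).sub (hcd ν hν' inferInstance n t)
  have hb : ∀ n t, ‖f n t‖ ≤ M n := fun n t =>
    (norm_sub_le _ _).trans (add_le_add (hbd μ hμ' inferInstance n t) (hbd ν hν' inferInstance n t))
  have h0 : ∀ n, f n 0 = 0 := by
    intro n
    simp only [hfdef]
    rw [iteratedDeriv_charFun_zero (hLp μ hμ' inferInstance n),
      iteratedDeriv_charFun_zero (hLp ν hν' inferInstance n), heq, sub_self]
  have hpos := bang f M hM hlc hf hb h0 hdiv
  have hneg := bang (fun n t => (-1) ^ n * f n (-t)) M hM hlc (fun n t => by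
      have h1 := ((hf n (-t)).scomp t (hasDerivAt_neg t)).const_mul ((-1 : ℂ) ^ n)
      refine h1.congr_deriv ?_
      simp [pow_succ]) (fun n t => by simpa using hb n (-t)) (fun n => by simp [h0]) hdiv
  apply Measure.ext_of_charFun
  funext t
  have key : f 0 t = 0 := by
    rcases le_total 0 t with ht | ht
    · exact hpos t ht
    · simpa using hneg (-t) (by linarith)
  simp only [hfdef, iteratedDeriv_zero] at key
  exact sub_eq_zero.1 key

lemma trunc_bound (R x : ℝ) (hR : 0 < R) (j : ℕ) :
    |x ^ j - (max (-R) (min x R)) ^ j| ≤ 2 / R ^ j * x ^ (2 * j) := by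
  have hx : x ^ (2 * j) = |x| ^ j * |x| ^ j := by
    rw [← pow_add, ← two_mul, (even_two_mul j).pow_abs]
  by_cases h : |x| ≤ R
  · rw [abs_le] at h
    rw [min_eq_left h.2, max_eq_right h.1, sub_self, abs_zero, hx]
    positivity
  · push Not at h
    have hT : |max (-R) (min x R)| ≤ R := by
      rw [abs_le]
      exact ⟨le_max_left _ _, max_le (by linarith) (min_le_right _ _)⟩
    have h1 : |x ^ j - (max (-R) (min x R)) ^ j| ≤ |x| ^ j + R ^ j := by
      refine (abs_sub _ _).trans ?_
      rw [abs_pow, abs_pow]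
      gcongr
    have h2 : R ^ j ≤ |x| ^ j := by gcongr
    have h3 : 0 < R ^ j := by positivity
    refine h1.trans ?_
    rw [hx, div_mul_eq_mul_div, le_div_iff₀ h3]
    nlinarith

/-- The truncated monomials as bounded continuous functions. -/
def truncPow (R : ℝ) (j : ℕ) : BoundedContinuousFunction ℝ ℝ :=
  BoundedContinuousFunction.ofNormedAddCommGroup (fun x => (max (-R) (min x R)) ^ j)
    (by fun_prop) (|R| ^ j) (by
      intro x
      rw [norm_pow]
      refine pow_le_pow_left₀ (norm_nonneg _) ?_ j
      rw [Real.norm_eq_abs, abs_le]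
      rcases abs_cases R with h | h
      · exact ⟨by rw [h.1]; exact le_max_left _ _,
          max_le (by linarith) ((min_le_right _ _).trans (le_abs_self R))⟩
      · refine ⟨?_, max_le (neg_le_abs R) ((min_le_right _ _).trans (le_abs_self R))⟩
        have := le_max_left (-R) (min x R)
        linarith)

lemma truncPow_apply (R : ℝ) (j : ℕ) (x : ℝ) : truncPow R j x = (max (-R) (min x R)) ^ j := rfl

lemma truncPow_le (R : ℝ) (hR : 0 < R) (k : ℕ) (x : ℝ) : truncPow R (2 * k) x ≤ x ^ (2 * k) := by
  rw [truncPow_apply, ← (even_two_mul k).pow_abs, ← (even_two_mul k).pow_abs x]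
  refine pow_le_pow_left₀ (abs_nonneg _) ?_ _
  by_cases h : |x| ≤ R
  · rw [abs_le] at h
    rw [min_eq_left h.2, max_eq_right h.1]
  · push Not at h
    refine le_trans ?_ h.le
    rw [abs_le]
    exact ⟨le_max_left _ _, max_le (by linarith) (min_le_right _ _)⟩

lemma trunc_int_bound (ρ : Measure ℝ) [IsProbabilityMeasure ρ] (j : ℕ)
    (h1 : Integrable (fun x : ℝ => x ^ j) ρ) (h2 : Integrable (fun x : ℝ => x ^ (2 * j)) ρ)
    (R : ℝ) (hR : 0 < R) (D : ℝ) (hD : ∫ x, x ^ (2 * j) ∂ρ ≤ D) :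
    |∫ x, x ^ j ∂ρ - ∫ x, truncPow R j x ∂ρ| ≤ 2 / R ^ j * D := by
  rw [← integral_sub h1 ((truncPow R j).integrable ρ)]
  refine abs_integral_le_integral_abs.trans ?_
  have : ∫ x, |x ^ j - truncPow R j x| ∂ρ ≤ ∫ x, 2 / R ^ j * x ^ (2 * j) ∂ρ :=
    integral_mono (h1.sub ((truncPow R j).integrable ρ)).abs (h2.const_mul _)
      (fun x => trunc_bound R x hR j)
  refine this.trans ?_
  rw [integral_const_mul]
  gcongr

lemma moments_limit (ν : ℕ → Measure ℝ) (hp : ∀ n, IsProbabilityMeasure (ν n))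
    (hinteg : ∀ n (j : ℕ), Integrable (fun x : ℝ => x ^ j) (ν n)) (c : ℕ → ℝ)
    (hc : ∀ j : ℕ, Tendsto (fun n => ∫ x, x ^ j ∂(ν n)) atTop (nhds (c j))) :
    ∃ μ : Measure ℝ, IsProbabilityMeasure μ ∧ (∀ j : ℕ, Integrable (fun x : ℝ => x ^ j) μ) ∧
      ∀ j : ℕ, ∫ x, x ^ j ∂μ = c j := by
  have hbd : ∀ j : ℕ, ∃ C, ∀ n, ∫ x, x ^ j ∂(ν n) ≤ C := by
    intro j
    obtain ⟨C, hC⟩ := (hc j).bddAbove_range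
    exact ⟨C, fun n => hC ⟨n, rfl⟩⟩
  choose C hC using hbd
  set P : ℕ → ProbabilityMeasure ℝ := fun n => ⟨ν n, hp n⟩ with hP
  have htight : IsTightMeasureSet {((μ : ProbabilityMeasure ℝ) : Measure ℝ) | μ ∈ Set.range P} := by
    apply isTightMeasureSet_of_tendsto_measure_norm_gt
    have hlim : Tendsto (fun r : ℝ => ENNReal.ofReal (C 2 / r ^ 2)) atTop (nhds 0) := by
      rw [← ENNReal.ofReal_zero]
      apply ENNReal.tendsto_ofReal
      exact tendsto_const_nhds.div_atTop (tendsto_pow_atTop (by norm_num))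
    refine tendsto_of_tendsto_of_tendsto_of_le_of_le' tendsto_const_nhds hlim
      (Eventually.of_forall fun _ => zero_le) ?_
    filter_upwards [eventually_gt_atTop 0] with r hr
    refine iSup₂_le ?_
    rintro _ ⟨_, ⟨n, rfl⟩, rfl⟩
    change ν n {x | r < ‖x‖} ≤ _
    have := hp n
    have h1 := mul_meas_ge_le_integral_of_nonneg (μ := ν n) (f := fun x : ℝ => x ^ 2)
      (Eventually.of_forall fun x => sq_nonneg x) (hinteg n 2) (r ^ 2)
    have h2 : (ν n).real {x | r ^ 2 ≤ x ^ 2} ≤ C 2 / r ^ 2 := by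
      rw [le_div_iff₀ (by positivity), mul_comm]
      exact h1.trans (hC 2 n)
    refine (measure_mono (t := {x | r ^ 2 ≤ x ^ 2}) ?_).trans ?_
    · intro x hx
      simp only [Set.mem_ofPred_eq, Real.norm_eq_abs] at hx ⊢
      rw [← sq_abs x]
      gcongr
    · rw [← ofReal_measureReal]
      exact ENNReal.ofReal_le_ofReal h2
  have hcomp := isCompact_closure_of_isTightMeasureSet htight
  obtain ⟨μ, -, hμ⟩ := hcomp.ultrafilter_le_nhds ((hyperfilter ℕ).map P) (by
    rw [le_principal_iff]
    change P ⁻¹' closure (Set.range P) ∈ (hyperfilter ℕ : Filter ℕ)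
    exact Filter.univ_mem' fun n => subset_closure ⟨n, rfl⟩)
  have hμ' : Tendsto P (hyperfilter ℕ : Filter ℕ) (nhds μ) := hμ
  rw [ProbabilityMeasure.tendsto_iff_forall_integral_tendsto] at hμ'
  have hc' : ∀ j : ℕ, Tendsto (fun n => ∫ x, x ^ j ∂(ν n)) (hyperfilter ℕ : Filter ℕ) (nhds (c j)) :=
    fun j => (hc j).mono_left Nat.hyperfilter_le_atTop
  have htr : ∀ (R : ℝ) (j : ℕ), Tendsto (fun n => ∫ x, truncPow R j x ∂(ν n))
      (hyperfilter ℕ : Filter ℕ) (nhds (∫ x, truncPow R j x ∂(μ : Measure ℝ))) :=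
    fun R j => hμ' (truncPow R j)
  have htrle : ∀ (R : ℝ), 0 < R → ∀ k : ℕ,
      ∫ x, truncPow R (2 * k) x ∂(μ : Measure ℝ) ≤ C (2 * k) := by
    intro R hR k
    refine le_of_tendsto' (htr R (2 * k)) fun n => ?_
    have := hp n
    exact (integral_mono ((truncPow R _).integrable _) (hinteg n _)
      (fun x => truncPow_le R hR k x)).trans (hC _ n)
  have hC0 : ∀ k, 0 ≤ C (2 * k) := fun k =>
    (integral_nonneg fun x => (even_two_mul k).pow_nonneg x).trans (hC (2 * k) 0)
  have hlint : ∀ k : ℕ, ∫⁻ x, ENNReal.ofReal (x ^ (2 * k)) ∂(μ : Measure ℝ)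
      ≤ ENNReal.ofReal (C (2 * k)) := by
    intro k
    have h1 : ∀ x : ℝ, liminf (fun m : ℕ => ENNReal.ofReal (truncPow ((m : ℝ) + 1) (2 * k) x)) atTop
        = ENNReal.ofReal (x ^ (2 * k)) := by
      intro x
      apply Tendsto.liminf_eq
      apply tendsto_const_nhds.congr'
      filter_upwards [eventually_ge_atTop ⌈|x|⌉₊] with m hm
      have h3 : |x| ≤ (m : ℝ) + 1 := by
        have := Nat.le_ceil |x|
        have h4 : ((⌈|x|⌉₊ : ℕ) : ℝ) ≤ m := by exact_mod_cast hm
        linarith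
      rw [abs_le] at h3
      rw [truncPow_apply, min_eq_left h3.2, max_eq_right h3.1]
    simp_rw [← h1]
    refine (lintegral_liminf_le fun m => by
      have := (truncPow ((m : ℝ) + 1) (2 * k)).continuous.measurable
      fun_prop).trans ?_
    refine liminf_le_of_le (by isBoundedDefault) ?_
    intro b hb
    obtain ⟨m, hm⟩ := hb.exists
    refine hm.trans ?_
    rw [← ofReal_integral_eq_lintegral_ofReal ((truncPow _ _).integrable _)
      (Eventually.of_forall fun x => (even_two_mul k).pow_nonneg _)]
    exact ENNReal.ofReal_le_ofReal (htrle _ (by positivity) k)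
  have hIe : ∀ k : ℕ, Integrable (fun x : ℝ => x ^ (2 * k)) (μ : Measure ℝ) := by
    intro k
    refine ⟨by fun_prop, ?_⟩
    rw [hasFiniteIntegral_iff_ofReal (Eventually.of_forall fun x => (even_two_mul k).pow_nonneg x)]
    exact (hlint k).trans_lt ENNReal.ofReal_lt_top
  have hIe' : ∀ k : ℕ, ∫ x, x ^ (2 * k) ∂(μ : Measure ℝ) ≤ C (2 * k) := by
    intro k
    have h1 := hlint k
    rw [← ofReal_integral_eq_lintegral_ofReal (hIe k)
      (Eventually.of_forall fun x => (even_two_mul k).pow_nonneg _)] at h1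
    exact (ENNReal.ofReal_le_ofReal_iff (hC0 k)).1 h1
  have hI : ∀ j : ℕ, Integrable (fun x : ℝ => x ^ j) (μ : Measure ℝ) := by
    intro j
    refine ((integrable_const (1 : ℝ)).add (hIe j)).mono' (by fun_prop) ?_
    refine Eventually.of_forall fun x => ?_
    simp only [Pi.add_apply, norm_pow, Real.norm_eq_abs]
    have hx : x ^ (2 * j) = |x| ^ j * |x| ^ j := by
      rw [← pow_add, ← two_mul, (even_two_mul j).pow_abs]
    rw [hx]
    nlinarith [sq_nonneg (|x| ^ j - 1), sq_nonneg (|x| ^ j)]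
  refine ⟨μ, inferInstance, hI, ?_⟩
  intro j
  rcases Nat.eq_zero_or_pos j with hj | hj
  · subst hj
    have h1 := hc 0
    have h2 : (fun n => ∫ x, x ^ 0 ∂(ν n)) = fun _ => (1 : ℝ) := by
      funext n; have := hp n; simp
    rw [h2] at h1
    have := tendsto_nhds_unique h1 tendsto_const_nhds
    simp [this]
  · have hR : ∀ m : ℕ, |c j - ∫ x, x ^ j ∂(μ : Measure ℝ)| ≤ 4 * C (2 * j) / ((m : ℝ) + 1) ^ j := by
      intro m
      have hm : (0 : ℝ) < (m : ℝ) + 1 := by positivity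
      have h1 : |c j - ∫ x, truncPow ((m : ℝ) + 1) j x ∂(μ : Measure ℝ)|
          ≤ 2 / ((m : ℝ) + 1) ^ j * C (2 * j) := by
        refine le_of_tendsto' ((hc' j).sub (htr _ j)).abs fun n => ?_
        have := hp n
        exact trunc_int_bound (ν n) j (hinteg n j) (hinteg n _) _ hm _ (hC _ n)
      have h2 := trunc_int_bound (μ : Measure ℝ) j (hI j) (hIe j) _ hm _ (hIe' j)
      rw [abs_sub_comm] at h2
      have h3 := abs_sub_le (c j) (∫ x, truncPow ((m : ℝ) + 1) j x ∂(μ : Measure ℝ))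
        (∫ x, x ^ j ∂(μ : Measure ℝ))
      have h4 : 4 * C (2 * j) / ((m : ℝ) + 1) ^ j = 2 / ((m : ℝ) + 1) ^ j * C (2 * j)
        + 2 / ((m : ℝ) + 1) ^ j * C (2 * j) := by ring
      linarith
    have hlim : Tendsto (fun m : ℕ => 4 * C (2 * j) / ((m : ℝ) + 1) ^ j) atTop (nhds 0) := by
      apply tendsto_const_nhds.div_atTop
      exact (tendsto_pow_atTop hj.ne').comp
        (tendsto_atTop_add_const_right _ _ tendsto_natCast_atTop_atTop)
    have h5 := ge_of_tendsto' hlim hR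
    have h6 := abs_nonpos_iff.1 h5
    linarith

lemma gaussian_integrable_pow (j : ℕ) :
    Integrable (fun x : ℝ => x ^ j) (ProbabilityTheory.gaussianReal 0 1) := by
  have h := (ProbabilityTheory.memLp_id_gaussianReal (μ := 0) (v := 1) j).integrable_norm_pow'
  refine h.mono' (by fun_prop) (Eventually.of_forall fun x => ?_)
  simp

lemma gaussian_odd (j : ℕ) (hj : Odd j) :
    ∫ x, x ^ j ∂(ProbabilityTheory.gaussianReal 0 1) = 0 := by
  have h := ProbabilityTheory.gaussianReal_map_neg (μ := 0) (v := 1)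
  have h1 : ∫ x, x ^ j ∂((ProbabilityTheory.gaussianReal 0 1).map (fun x => -x))
      = ∫ x, (-x) ^ j ∂(ProbabilityTheory.gaussianReal 0 1) :=
    integral_map (by fun_prop) (by fun_prop)
  rw [h, neg_zero] at h1
  simp_rw [hj.neg_pow] at h1
  rw [integral_neg] at h1
  linarith

lemma gaussian_even (k : ℕ) :
    ∫ x, x ^ (2 * k) ∂(ProbabilityTheory.gaussianReal 0 1)
      = ((2 * k).factorial : ℝ) / (2 ^ k * (k.factorial : ℝ)) := by
  rw [ProbabilityTheory.integral_gaussianReal_eq_integral_smul (by norm_num)]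
  simp only [ProbabilityTheory.gaussianPDFReal, smul_eq_mul, sub_zero, NNReal.coe_one, mul_one]
  have h1 : ∀ x : ℝ, (√(2 * π))⁻¹ * rexp (-x ^ 2 / 2) * x ^ (2 * k)
      = (fun y => (√(2 * π))⁻¹ * (y ^ ((2 * k : ℕ) : ℝ) * rexp (-(1 / 2) * y ^ (2 : ℝ)))) |x| := by
    intro x
    simp only [Real.rpow_natCast, Real.rpow_ofNat, sq_abs]
    rw [(even_two_mul k).pow_abs, show -x ^ 2 / 2 = -(1 / 2) * x ^ 2 by ring]
    ring
  rw [integral_congr_ae (Eventually.of_forall h1), integral_comp_abs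
    (f := fun y => (√(2 * π))⁻¹ * (y ^ ((2 * k : ℕ) : ℝ) * rexp (-(1 / 2) * y ^ (2 : ℝ)))), integral_const_mul,
    integral_rpow_mul_exp_neg_mul_rpow (by norm_num)
      (by have : (0 : ℝ) ≤ ((2 * k : ℕ) : ℝ) := by positivity
          linarith) (by norm_num)]
  have h2 : (((2 * k : ℕ) : ℝ) + 1) / 2 = k + 1 / 2 := by push_cast; ring
  rw [h2, neg_div, h2, Real.Gamma_nat_add_half]
  have h3 : ((1 : ℝ) / 2) ^ (-((k : ℝ) + 1 / 2)) = 2 ^ k * √2 := by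
    rw [one_div, Real.inv_rpow (by norm_num), ← Real.rpow_neg (by norm_num), neg_neg,
      Real.rpow_add (by norm_num), Real.rpow_natCast, Real.sqrt_eq_rpow, one_div]
  rw [h3, Real.sqrt_mul (by norm_num)]
  have h4 : ((2 * k).factorial : ℝ) = ((2 * k - 1).doubleFactorial : ℝ) * (2 ^ k * (k.factorial : ℝ)) := by
    rcases Nat.eq_zero_or_pos k with hk | hk
    · subst hk; simp
    · obtain ⟨m, rfl⟩ : ∃ m, k = m + 1 := ⟨k - 1, by omega⟩
      have h5 := Nat.factorial_eq_mul_doubleFactorial (2 * m + 1)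
      rw [show 2 * m + 1 + 1 = 2 * (m + 1) by ring, Nat.doubleFactorial_two_mul] at h5
      rw [show 2 * (m + 1) - 1 = 2 * m + 1 by omega, h5]
      push_cast; ring
  rw [h4]
  have h6 : (√2 : ℝ) ≠ 0 := by positivity
  have h7 : (√π : ℝ) ≠ 0 := by positivity
  have h8 : (k.factorial : ℝ) ≠ 0 := by positivity
  field_simp

lemma product_law (ω : ℝ → ℝ) (hω : OmegaClass ω) (X : ℝ) (hX : 0 < X) :
    ∃ ν : Measure ℝ, IsProbabilityMeasure ν ∧ (∀ j : ℕ, Integrable (fun x : ℝ => x ^ j) ν) ∧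
      ∀ j : ℕ, ∫ x, x ^ j ∂ν = (∫ z, z ^ j ∂(ProbabilityTheory.gaussianReal 0 1)) *
        (Mom j X ω / √(Mom 2 X ω) ^ j) := by
  set s := √(Mom 2 X ω) with hs
  set g : ℝ → ℝ := fun x => ω x * Real.log (ω x) / s with hg
  have hgc : ContinuousOn g (Set.Icc X (2 * X)) := by
    have h1 : ContinuousOn ω (Set.Icc X (2 * X)) :=
      hω.contDiff.continuousOn.mono fun x hx => lt_of_lt_of_le hX hx.1
    have h2 : ContinuousOn (fun x => Real.log (ω x)) (Set.Icc X (2 * X)) :=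
      h1.log fun x hx => (hω.pos x (lt_of_lt_of_le hX hx.1)).ne'
    exact (h1.mul h2).div_const s
  set lam : Measure ℝ := ENNReal.ofReal (1 / X) • volume.restrict (Set.Ioc X (2 * X)) with hlam
  have hlamP : IsProbabilityMeasure lam := by
    constructor
    rw [hlam, Measure.smul_apply, Measure.restrict_apply_univ, Real.volume_Ioc, smul_eq_mul,
      ← ENNReal.ofReal_mul (by positivity)]
    rw [show 1 / X * (2 * X - X) = 1 by field_simp; ring, ENNReal.ofReal_one]
  have hlamint : ∀ h : ℝ → ℝ, ∫ x, h x ∂lam = (1 / X) * ∫ x in X..(2 * X), h x := by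
    intro h
    rw [hlam, integral_smul_measure, intervalIntegral.integral_of_le (by linarith),
      ENNReal.toReal_ofReal (by positivity), smul_eq_mul]
  have hgi : ∀ j : ℕ, Integrable (fun x => g x ^ j) lam := by
    intro j
    apply Integrable.smul_measure _ ENNReal.ofReal_ne_top
    exact ((hgc.pow j).integrableOn_Icc).mono_set Set.Ioc_subset_Icc_self
  have hgm : AEMeasurable g lam := by
    have := (hgi 1).aestronglyMeasurable.aemeasurable
    simpa using this
  set γ := ProbabilityTheory.gaussianReal 0 1 with hγ
  have hF : AEMeasurable (fun p : ℝ × ℝ => p.1 * g p.2) (γ.prod lam) :=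
    (measurable_fst.aemeasurable).mul (hgm.comp_quasiMeasurePreserving
      Measure.quasiMeasurePreserving_snd)
  refine ⟨(γ.prod lam).map (fun p => p.1 * g p.2), Measure.isProbabilityMeasure_map hF, ?_, ?_⟩
  · intro j
    rw [integrable_map_measure (by fun_prop) hF]
    have := (gaussian_integrable_pow j).mul_prod (hgi j)
    refine this.congr (Eventually.of_forall fun p => ?_)
    simp [mul_pow]
  · intro j
    rw [integral_map hF (by fun_prop)]
    simp_rw [mul_pow]
    rw [integral_prod_mul (fun z : ℝ => z ^ j) (fun x => g x ^ j), hlamint]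
    congr 1
    simp only [hg, div_pow, Mom]
    rw [intervalIntegral.integral_div]
    ring

/-- Existence and uniqueness of a probability measure with the prescribed
moments. -/
theorem unique_measure_with_moments (ω : ℝ → ℝ) (hω : OmegaClass ω) :
    ∃! μ : Measure ℝ, IsProbabilityMeasure μ ∧
      (∀ j : ℕ, Integrable (fun α : ℝ => α ^ j) μ) ∧
      (∀ j : ℕ, Even j → ∫ α, α ^ j ∂μ = gaussMoment j * Llim ω j) ∧
      (∀ j : ℕ, Odd j → ∫ α, α ^ j ∂μ = 0) := by
  have hpos : ∀ᶠ X in atTop, 0 < X ∧ 0 < Mom 2 X ω := by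
    obtain ⟨c, hc, h⟩ := hω.mom2_lower 1 one_pos
    filter_upwards [h, eventually_gt_atTop 0] with X h1 h2
    exact ⟨h2, lt_of_lt_of_le (by positivity) h1⟩
  obtain ⟨X0, hX0⟩ := eventually_atTop.1 hpos
  have hev : ∀ n : ℕ, 0 < X0 + n ∧ 0 < Mom 2 (X0 + n) ω := fun n =>
    hX0 _ (by linarith [(Nat.cast_nonneg n : (0 : ℝ) ≤ n)])
  choose ν hν1 hν2 hν3 using fun n : ℕ => product_law ω hω (X0 + n) (hev n).1
  have hXt : Tendsto (fun n : ℕ => X0 + (n : ℝ)) atTop atTop :=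
    tendsto_atTop_add_const_left _ _ tendsto_natCast_atTop_atTop
  obtain ⟨μ, hμ1, hμ2, hμ3⟩ := moments_limit ν hν1 hν2
    (fun j => if Even j then gaussMoment j * Llim ω j else 0) (by
      intro j
      by_cases hj : Even j
      · simp only [hj, if_true]
        have h1 := ((hω.Llim_exists j hj).comp hXt).const_mul (gaussMoment j)
        refine h1.congr fun n => ?_
        rw [hν3]
        obtain ⟨k, rfl⟩ := hj
        rw [← two_mul, gaussian_even, pow_mul, Real.sq_sqrt (hev n).2.le]
        simp [gaussMoment]
      · simp only [hj, if_false]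
        refine tendsto_const_nhds.congr fun n => ?_
        rw [hν3, gaussian_odd j (Nat.not_even_iff_odd.1 hj), zero_mul])
  have hE : ∀ j : ℕ, Even j → ∫ α, α ^ j ∂μ = gaussMoment j * Llim ω j := fun j hj => by
    rw [hμ3, if_pos hj]
  have hO : ∀ j : ℕ, Odd j → ∫ α, α ^ j ∂μ = 0 := fun j hj => by
    rw [hμ3, if_neg (Nat.not_even_iff_odd.2 hj)]
  refine ⟨μ, ⟨hμ1, hμ2, hE, hO⟩, ?_⟩
  rintro ρ ⟨hρ1, hρ2, hρE, hρO⟩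
  symm
  refine carleman_unique μ ρ hμ2 hρ2 ?_ ?_ ?_
  · intro j
    rcases Nat.even_or_odd j with hj | hj
    · rw [hE j hj, hρE j hj]
    · rw [hO j hj, hρO j hj]
  · have hL2 : Llim ω 2 = 1 := by
      refine tendsto_nhds_unique (hω.Llim_exists 2 even_two) (tendsto_const_nhds.congr' ?_)
      filter_upwards [hpos] with X hX
      simp [hX.2.ne']
    rw [hE 2 even_two, hL2]
    norm_num [gaussMoment, Nat.factorial]
  · intro hs
    have h := hs.hasSum.tendsto_sum_nat
    refine not_tendsto_nhds_of_tendsto_atTop hω.carleman _ (h.congr fun n => ?_)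
    refine Finset.sum_congr rfl fun k _ => ?_
    rw [hE _ (even_two_mul _)]
end
end
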